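/- arXiv:1304.1015 — 2 statements merged into one kernel-verified Lean document; each statement's English description precedes it below -/
import Mathlib

section
/- Let 𝔅 be a homothecy invariant basis of nonempty bounded open convex subsets of ℝⁿ, let μ be a nonzero locally finite nonnegative Borel measure doubling with respect to 𝔅 with constant Δ_μ, and set ρ = Δ_μ^{−⌈(3/2)·log₂ n⌉}. Let B ∈ 𝔅 with associated rectangle R = R_B satisfying B ⊆ R ⊆ h(B) for a homothety h of ratio n^{3/2} centered at a point of B. For a positive integer m let ξ_m = 1 − 9·δ^{4+⌈log₂(34√n)⌉}·(log₂(2^m/√n))^{−1}, where δ is the doubling constant of μ with respect to the affine images of cubes adapted to R, and assume m is so large that ξ_m > ρ. Then for every positive integer N there exists a set B_N ⊆ R such that: (i) B_N is a finite union of pairwise disjoint homothetic copies of B; (ii) for each homothetic copy B_α in the union, its associated rectangle R_{B_α} belongs to the dyadic mesh D_R and satisfies R_{B_α}^{(s)} = R for some integer 0 ≤ s ≤ Nm; and (iii) μ(B_N) ≥ ρ·(1 − Ψ^{N+1})/(1 − Ψ)·μ(R), where Ψ = ξ_m − ρ. -/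
open MeasureTheory Set Filter
open scoped ENNReal Topology Pointwise

noncomputable section

/-- The maximal operator `M_{𝔅,μ}` associated to a measure `μ` and a collection `𝔅`
of subsets of `ℝⁿ`, applied to `f` at the point `x` (valued in `ℝ≥0∞`; it equals `0`
outside the union of `𝔅`). -/
noncomputable def maxOp {n : ℕ} (μ : Measure (EuclideanSpace ℝ (Fin n)))
    (𝔅 : Set (Set (EuclideanSpace ℝ (Fin n))))
    (f : EuclideanSpace ℝ (Fin n) → ℝ) (x : EuclideanSpace ℝ (Fin n)) : ℝ≥0∞ :=
  ⨆ (B : Set (EuclideanSpace ℝ (Fin n))) (_ : B ∈ 𝔅) (_ : x ∈ B) (_ : 0 < μ B),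
    (∫⁻ y in B, ENNReal.ofReal |f y| ∂μ) / μ B

/-- A collection of sets is homothecy invariant if it is closed under translations and
positive dilations. -/
def HomothecyInvariant {n : ℕ} (𝔅 : Set (Set (EuclideanSpace ℝ (Fin n)))) : Prop :=
  ∀ B ∈ 𝔅, (∀ y : EuclideanSpace ℝ (Fin n), y +ᵥ B ∈ 𝔅) ∧ (∀ s : ℝ, 0 < s → s • B ∈ 𝔅)

/-- `μ` is doubling with respect to the collection `𝔅`, with constant `Δ`: whenever
`B ∈ 𝔅` and a translate of the dilate `2·B` contains `B`, its measure is at most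
`Δ·μ(B)`. -/
def DoublingWrt {n : ℕ} (μ : Measure (EuclideanSpace ℝ (Fin n)))
    (𝔅 : Set (Set (EuclideanSpace ℝ (Fin n)))) (Δ : ℝ) : Prop :=
  ∀ B ∈ 𝔅, ∀ σ : EuclideanSpace ℝ (Fin n),
    B ⊆ σ +ᵥ (2 : ℝ) • B → μ (σ +ᵥ (2 : ℝ) • B) ≤ ENNReal.ofReal Δ * μ B

/-- A member of a basis of convex sets: nonempty, bounded, open and convex. -/
def IsConvexBasisSet {n : ℕ} (B : Set (EuclideanSpace ℝ (Fin n))) : Prop :=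
  B.Nonempty ∧ Bornology.IsBounded B ∧ IsOpen B ∧ Convex ℝ B

/-- An open axis-parallel rectangle in `ℝⁿ`. -/
def IsAxisRect {n : ℕ} (R : Set (EuclideanSpace ℝ (Fin n))) : Prop :=
  ∃ a b : Fin n → ℝ, (∀ i, a i < b i) ∧ R = {x | ∀ i, x i ∈ Set.Ioo (a i) (b i)}

/-- An open rectangle (possibly rotated rectangular parallelepiped) in `ℝⁿ`:
the image of an open axis-parallel rectangle under a rigid motion. -/
def IsRect {n : ℕ} (R : Set (EuclideanSpace ℝ (Fin n))) : Prop :=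
  ∃ (f : EuclideanSpace ℝ (Fin n) ≃ᵢ EuclideanSpace ℝ (Fin n))
    (S : Set (EuclideanSpace ℝ (Fin n))), IsAxisRect S ∧ R = f '' S

/-- An open axis-parallel cube in `ℝⁿ`. -/
def IsAxisCube {n : ℕ} (C : Set (EuclideanSpace ℝ (Fin n))) : Prop :=
  ∃ (a : Fin n → ℝ) (s : ℝ), 0 < s ∧ C = {x | ∀ i, x i ∈ Set.Ioo (a i) (a i + s)}

/-- `M_{𝔅,μ}` is bounded on `L^p(ν)`. -/
def BoundedOnLp {n : ℕ} (μ ν : Measure (EuclideanSpace ℝ (Fin n)))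
    (𝔅 : Set (Set (EuclideanSpace ℝ (Fin n)))) (p : ℝ) : Prop :=
  ∃ C : ℝ≥0∞, C ≠ ⊤ ∧ ∀ f : EuclideanSpace ℝ (Fin n) → ℝ, Measurable f →
    ∫⁻ x, maxOp μ 𝔅 f x ^ p ∂ν ≤ C * ∫⁻ x, ENNReal.ofReal |f x| ^ p ∂ν

/-- The Tauberian condition for `M_{𝔅,μ}` at level `γ`, with constant `c`, with respect
to the measure `ν`. -/
def TauberianCond {n : ℕ} (μ ν : Measure (EuclideanSpace ℝ (Fin n)))
    (𝔅 : Set (Set (EuclideanSpace ℝ (Fin n)))) (γ c : ℝ) : Prop :=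
  ∀ E : Set (EuclideanSpace ℝ (Fin n)), MeasurableSet E →
    ν {x | ENNReal.ofReal γ < maxOp μ 𝔅 (E.indicator 1) x} ≤ ENNReal.ofReal c * ν E

/-- The standard open dyadic box of scale `2^k` and position `m` in `ℝⁿ`. -/
def stdBox (n : ℕ) (k : ℤ) (m : Fin n → ℤ) : Set (Fin n → ℝ) :=
  {x | ∀ i, (m i : ℝ) * 2 ^ k < x i ∧ x i < ((m i : ℝ) + 1) * 2 ^ k}

/-- A parametrization of a rectangular grid: a rigid motion composed with a positive
diagonal scaling. The image of the standard unit box under such a map is a rectangle. -/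
def IsRectParam {n : ℕ} (T : (Fin n → ℝ) → EuclideanSpace ℝ (Fin n)) : Prop :=
  ∃ (f : EuclideanSpace ℝ (Fin n) ≃ᵢ EuclideanSpace ℝ (Fin n)) (l : Fin n → ℝ),
    (∀ i, 0 < l i) ∧
    ∀ x, T x = f ((WithLp.equiv 2 (Fin n → ℝ)).symm (fun i => l i * x i))

/-- The dyadic mesh generated by a rectangle parametrized by `T`. -/
def dyadicMesh {n : ℕ} (T : (Fin n → ℝ) → EuclideanSpace ℝ (Fin n)) :
    Set (Set (EuclideanSpace ℝ (Fin n))) :=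
  {S | ∃ (k : ℤ) (m : Fin n → ℤ), S = T '' stdBox n k m}

/-- `S` is a dyadic descendant of the rectangle `R`, `s` generations inside `R`. -/
def DyadicDescendant {n : ℕ} (R S : Set (EuclideanSpace ℝ (Fin n))) (s : ℕ) : Prop :=
  ∃ T : (Fin n → ℝ) → EuclideanSpace ℝ (Fin n), IsRectParam T ∧
    T '' stdBox n 0 0 = R ∧
    ∃ m : Fin n → ℤ, (∀ i, 0 ≤ m i ∧ m i < 2 ^ s) ∧ S = T '' stdBox n (-(s : ℤ)) m

/-- The family of all homothetic copies (translates and positive dilates) of `R₀`. -/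
def homCopies {n : ℕ} (R₀ : Set (EuclideanSpace ℝ (Fin n))) :
    Set (Set (EuclideanSpace ℝ (Fin n))) :=
  {S | ∃ (y : EuclideanSpace ℝ (Fin n)) (s : ℝ), 0 < s ∧ S = y +ᵥ s • R₀}

/-- Iterated halo sets `H_β^k(E)`: `H_β^0(E) = E` and
`H_β^{k+1}(E) = {x : M_{𝔊,μ}(1_{H_β^k(E)})(x) ≥ β}`. -/
def Hiter {n : ℕ} (μ : Measure (EuclideanSpace ℝ (Fin n)))
    (𝔊 : Set (Set (EuclideanSpace ℝ (Fin n)))) (β : ℝ)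
    (E : Set (EuclideanSpace ℝ (Fin n))) : ℕ → Set (EuclideanSpace ℝ (Fin n))
  | 0 => E
  | k + 1 => {x | ENNReal.ofReal β ≤ maxOp μ 𝔊 ((Hiter μ 𝔊 β E k).indicator 1) x}

/-- The Muckenhoupt `A_{p,𝔅}` condition for a weight `w` (with respect to Lebesgue
measure); here `1 - p/(p-1) = 1 - p'`. -/
def MuckenhouptAp {n : ℕ} (𝔅 : Set (Set (EuclideanSpace ℝ (Fin n))))
    (w : EuclideanSpace ℝ (Fin n) → ℝ) (p : ℝ) : Prop :=
  ∃ C : ℝ≥0∞, C ≠ ⊤ ∧ ∀ B ∈ 𝔅,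
    ((∫⁻ x in B, ENNReal.ofReal (w x) ∂volume) / volume B) *
      (((∫⁻ x in B, ENNReal.ofReal (w x) ^ (1 - p / (p - 1)) ∂volume) / volume B) ^ (p - 1))
      ≤ C

/-- `𝔅` is a Muckenhoupt basis: for every `1 < p < ∞` and every weight `w ∈ A_{p,𝔅}`,
the maximal operator `M_𝔅` is bounded on `L^p(w)`. -/
def MuckenhouptBasis {n : ℕ} (𝔅 : Set (Set (EuclideanSpace ℝ (Fin n)))) : Prop :=
  ∀ p : ℝ, 1 < p → ∀ w : EuclideanSpace ℝ (Fin n) → ℝ, (∀ x, 0 ≤ w x) →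
    LocallyIntegrable w volume → MuckenhouptAp 𝔅 w p →
    BoundedOnLp volume (volume.withDensity fun x => ENNReal.ofReal (w x)) 𝔅 p

end


namespace HC

/-- The open unit cube. -/
def Q (n : ℕ) : Set (Fin n → ℝ) := Metric.ball (fun _ => (1/2 : ℝ)) (1/2)

/-- Homothety. -/
def hom {n : ℕ} (w : Fin n → ℝ) (t : ℝ) (x : Fin n → ℝ) : Fin n → ℝ := w + t • x

theorem mem_Q {n : ℕ} (x : Fin n → ℝ) : x ∈ Q n ↔ ∀ i, 0 < x i ∧ x i < 1 := by
  unfold Q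
  rw [Metric.mem_ball, dist_pi_lt_iff (by norm_num)]
  refine forall_congr' fun i => ?_
  rw [Real.dist_eq, abs_lt]
  constructor <;> rintro ⟨h1, h2⟩ <;> constructor <;> linarith

/-- The direction escaping a convex set. -/
theorem exists_dir {n : ℕ} {K : Set (Fin n → ℝ)} (ho : IsOpen K) (hc : Convex ℝ K)
    (hne : K.Nonempty) (x : Fin n → ℝ) (hx : x ∉ K) :
    ∃ v : Fin n → ℝ, ‖v‖ ≤ 1 ∧ ∀ r : ℝ, 0 < r → ∀ k ∈ K, r < dist (x + r • v) k := by
  obtain ⟨f, hf⟩ := geometric_hahn_banach_open_point hc ho hx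
  have hcomp : IsCompact (Metric.closedBall (0 : Fin n → ℝ) 1) := isCompact_closedBall _ _
  obtain ⟨v, hv, hmax⟩ := hcomp.exists_isMaxOn ⟨0, by simp⟩ f.continuous.continuousOn
  have hvn : ‖v‖ ≤ 1 := by simpa using hv
  have hle : ∀ z, f z ≤ f v * ‖z‖ := by
    intro z
    rcases eq_or_ne z 0 with rfl | hz
    · simp
    have hz' : 0 < ‖z‖ := norm_pos_iff.2 hz
    have h1 : f (‖z‖⁻¹ • z) ≤ f v := by
      apply hmax
      simp [norm_smul, hz'.ne']
    rw [map_smul, smul_eq_mul, inv_mul_le_iff₀ hz'] at h1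
    linarith
  refine ⟨v, hvn, fun r hr k hk => ?_⟩
  have h1 := hle (x + r • v - k)
  have h2 := hf k hk
  rw [dist_eq_norm]
  simp only [map_sub, map_add, map_smul, smul_eq_mul] at h1
  have h0 : 0 < f v := by
    have h3 := hle (x - k)
    rw [map_sub] at h3
    by_contra hcon
    push Not at hcon
    have := mul_nonneg (neg_nonneg.2 hcon) (norm_nonneg (x - k))
    linarith
  by_contra hcon
  push Not at hcon
  have := mul_le_mul_of_nonneg_left hcon h0.le
  linarith

/-- One shell. -/
theorem shell {n : ℕ} (ν : Measure (Fin n → ℝ)) (δ : ℝ≥0∞)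
    (hd : ∀ y r, 0 < r → ν (Metric.ball y (2 * r)) ≤ δ * ν (Metric.ball y r))
    {K : Set (Fin n → ℝ)} (ho : IsOpen K) (hc : Convex ℝ K) (hne : K.Nonempty)
    (E : Set (Fin n → ℝ)) (hEQ : E ⊆ Q n) (hEK : ∀ x ∈ E, x ∉ K) (ε : ℝ)
    (hE : ∀ x ∈ E, ∃ k ∈ K, dist x k ≤ ε) (r : ℝ) (hr0 : 0 < r) (hr : 2 * ε ≤ r)
    (hr4 : r ≤ 1/4) :
    ∃ U : Set (Fin n → ℝ), IsOpen U ∧ U ⊆ Metric.ball (fun _ => (1/2:ℝ)) 1 ∧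
      (∀ z ∈ U, (∀ k ∈ K, r / 2 < dist z k) ∧ ∃ k ∈ K, dist z k < 2 * r) ∧
      ν E ≤ δ ^ 2 * ν U := by
  have hv : ∀ x : Fin n → ℝ, ∃ v : Fin n → ℝ, x ∈ E → 
      (‖v‖ ≤ 1 ∧ ∀ r : ℝ, 0 < r → ∀ k ∈ K, r < dist (x + r • v) k) := by
    intro x
    by_cases hx : x ∈ E
    · obtain ⟨v, h⟩ := exists_dir ho hc hne x (hEK x hx)
      exact ⟨v, fun _ => h⟩
    · exact ⟨0, fun h => absurd h hx⟩
  choose v hv using hv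
  set y : (Fin n → ℝ) → (Fin n → ℝ) := fun x => x + r • v x with hy
  have hyx : ∀ x ∈ E, dist (y x) x ≤ r := by
    intro x hx
    have := (hv x hx).1
    simp only [hy, dist_eq_norm, add_sub_cancel_left, norm_smul, Real.norm_eq_abs, abs_of_pos hr0]
    nlinarith
  obtain ⟨u, huE, hud, hucov⟩ := Vitali.exists_disjoint_subfamily_covering_enlargement
    (fun x => Metric.ball (y x) (r/2)) E (fun _ => (1:ℝ)) 2 (by norm_num) (fun _ _ => by norm_num)
    1 (fun _ _ => le_rfl) (fun x _ => ⟨y x, by simpa using hr0⟩)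
  have hucount : u.Countable := by
    apply hud.countable_of_isOpen
    · intro x _; exact Metric.isOpen_ball
    · intro x _; exact ⟨y x, by simpa using hr0⟩
  refine ⟨⋃ x ∈ u, Metric.ball (y x) (r/2), isOpen_biUnion fun _ _ => Metric.isOpen_ball, ?_, ?_, ?_⟩
  · intro z hz
    simp only [mem_iUnion, exists_prop] at hz
    obtain ⟨x, hx, hz⟩ := hz
    have h1 := hyx x (huE hx)
    have h2 := hEQ (huE hx)
    rw [Q, Metric.mem_ball] at h2
    rw [Metric.mem_ball] at hz ⊢
    have h3 := dist_triangle z (y x) (fun _ => (1/2:ℝ))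
    have h4 := dist_triangle (y x) x (fun _ => (1/2:ℝ))
    linarith
  · intro z hz
    simp only [mem_iUnion, exists_prop] at hz
    obtain ⟨x, hx, hz⟩ := hz
    rw [Metric.mem_ball] at hz
    constructor
    · intro k hk
      have h1 : r < dist (y x) k := (hv x (huE hx)).2 r hr0 k hk
      have h2 := dist_triangle (y x) z k
      rw [dist_comm (y x) z] at h2
      linarith
    · obtain ⟨k, hk, h1⟩ := hE x (huE hx)
      refine ⟨k, hk, ?_⟩
      have h2 := hyx x (huE hx)
      have h3 := dist_triangle z (y x) k
      have h4 := dist_triangle (y x) x k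
      linarith
  · have hsub : E ⊆ ⋃ x ∈ u, Metric.ball (y x) (2 * (2 * (r/2))) := by
      intro x hx
      obtain ⟨b, hb, ⟨z, hz1, hz2⟩, -⟩ := hucov x hx
      simp only [mem_iUnion, exists_prop]
      refine ⟨b, hb, ?_⟩
      rw [Metric.mem_ball] at hz1 hz2 ⊢
      have h1 := hyx x hx
      have h2 := dist_triangle x (y x) (y b)
      have h3 := dist_triangle (y x) z (y b)
      rw [dist_comm x (y x)] at h2
      rw [dist_comm (y x) z] at h3
      linarith
    calc ν E ≤ ν (⋃ x ∈ u, Metric.ball (y x) (2 * (2 * (r/2)))) := measure_mono hsub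
      _ ≤ ∑' x : u, ν (Metric.ball (y x) (2 * (2 * (r/2)))) := measure_biUnion_le ν hucount _
      _ ≤ ∑' x : u, δ ^ 2 * ν (Metric.ball (y x) (r/2)) := by
          refine ENNReal.tsum_le_tsum fun x => ?_
          calc _ ≤ δ * ν (Metric.ball (y x) (2 * (r/2))) := hd _ _ (by linarith)
            _ ≤ δ * (δ * ν (Metric.ball (y x) (r/2))) := by
                gcongr; exact hd _ _ (by linarith)
            _ = _ := by ring
      _ = δ ^ 2 * ∑' x : u, ν (Metric.ball (y x) (r/2)) := ENNReal.tsum_mul_left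
      _ = _ := by
          rw [measure_biUnion hucount hud (fun _ _ => Metric.isOpen_ball.measurableSet)]

theorem layer {n : ℕ} (ν : Measure (Fin n → ℝ)) (δ : ℝ≥0∞)
    (hd : ∀ y r, 0 < r → ν (Metric.ball y (2 * r)) ≤ δ * ν (Metric.ball y r))
    {K : Set (Fin n → ℝ)} (ho : IsOpen K) (hc : Convex ℝ K) (hne : K.Nonempty)
    (E : Set (Fin n → ℝ)) (hEQ : E ⊆ Q n) (hEK : ∀ x ∈ E, x ∉ K) (m : ℕ)
    (hE : ∀ x ∈ E, ∃ k ∈ K, dist x k ≤ (2 ^ m : ℝ)⁻¹) (J : ℕ) (hJ : 2 * J + 1 ≤ m) :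
    J * ν E ≤ δ ^ 3 * ν (Q n) := by
  have hr4 : ∀ j : Fin J, 2 * (2 ^ m : ℝ)⁻¹ * 4 ^ (j : ℕ) ≤ 1/4 := by
    intro j
    have hj := j.2
    have h1 : (2 : ℝ) ^ (2 * (j : ℕ) + 3) ≤ 2 ^ m := pow_le_pow_right₀ (by norm_num) (by omega)
    rw [pow_add, pow_mul] at h1
    norm_num at h1
    have h2 : (0:ℝ) < 2 ^ m := by positivity
    rw [mul_assoc, mul_comm, mul_assoc, inv_mul_le_iff₀ h2]
    linarith
  have hex := fun j : Fin J => shell ν δ hd ho hc hne E hEQ hEK ((2 ^ m : ℝ)⁻¹) hE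
    (2 * (2 ^ m : ℝ)⁻¹ * 4 ^ (j : ℕ)) (by positivity)
    (le_mul_of_one_le_right (by positivity) (one_le_pow₀ (by norm_num))) (hr4 j)
  choose U hUo hUb hUs hUE using hex
  have hlt : ∀ i j : Fin J, i < j → Disjoint (U i) (U j) := by
    intro i j hij
    rw [Set.disjoint_left]
    intro z hz1 hz2
    obtain ⟨k, hk, h1⟩ := (hUs i z hz1).2
    have h2 := (hUs j z hz2).1 k hk
    have h3 : (4 : ℝ) ^ ((i : ℕ) + 1) ≤ 4 ^ (j : ℕ) := pow_le_pow_right₀ (by norm_num) hij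
    rw [pow_succ] at h3
    have h2 : (0:ℝ) < 2 * (2 ^ m)⁻¹ := by positivity
    have h4 := mul_le_mul_of_nonneg_left h3 h2.le
    linarith
  have hdis : Pairwise (Function.onFun Disjoint U) := by
    intro i j hij
    rcases lt_or_gt_of_ne hij with h | h
    · exact hlt i j h
    · exact (hlt j i h).symm
  have hQ : ν (Metric.ball (fun _ => (1/2:ℝ)) 1) ≤ δ * ν (Q n) := by
    have := hd (fun _ => (1/2:ℝ)) (1/2) (by norm_num)
    norm_num at this ⊢
    simpa [Q] using this
  calc (J : ℝ≥0∞) * ν E = ∑ _j : Fin J, ν E := by simp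
    _ ≤ ∑ j : Fin J, δ ^ 2 * ν (U j) := Finset.sum_le_sum fun j _ => hUE j
    _ = δ ^ 2 * ∑ j : Fin J, ν (U j) := by rw [Finset.mul_sum]
    _ = δ ^ 2 * ν (⋃ j, U j) := by
        rw [measure_iUnion hdis (fun j => (hUo j).measurableSet), tsum_fintype]
    _ ≤ δ ^ 2 * ν (Metric.ball (fun _ => (1/2:ℝ)) 1) := by
        gcongr; exact iUnion_subset hUb
    _ ≤ δ ^ 2 * (δ * ν (Q n)) := by gcongr
    _ = _ := by ring

theorem hyper_null {n : ℕ} (ν : Measure (Fin n → ℝ)) (δ : ℝ≥0∞) (hδ : δ ≠ ⊤)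
    (hd : ∀ y r, 0 < r → ν (Metric.ball y (2 * r)) ≤ δ * ν (Metric.ball y r))
    (hfin : ν (Q n) ≠ ⊤) (i : Fin n) (c : ℝ) : ν {x | x ∈ Q n ∧ x i = c} = 0 := by
  have key : ∀ J : ℕ, (J : ℝ≥0∞) * ν {x | x ∈ Q n ∧ x i = c} ≤ δ ^ 3 * ν (Q n) := by
    intro J
    refine layer ν δ hd (K := {x | x i < c}) (isOpen_lt (continuous_apply i) continuous_const)
      (convex_halfSpace_lt (f := fun x : Fin n → ℝ => x i) ⟨fun _ _ => rfl, fun _ _ => rfl⟩ c)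
      ⟨fun _ => c - 1, by simp⟩ _ (fun x hx => hx.1) (fun x hx => ?_) (2 * J + 1) (fun x hx => ?_) J le_rfl
    · simp [hx.2]
    · refine ⟨x - fun _ => (2 ^ (2 * J + 1) : ℝ)⁻¹, ?_, ?_⟩
      · simp [hx.2]
      · rw [dist_pi_le_iff (by positivity)]
        intro b
        simp [Real.dist_eq]
  by_contra hne
  have hX : δ ^ 3 * ν (Q n) / ν {x | x ∈ Q n ∧ x i = c} ≠ ⊤ :=
    ENNReal.div_ne_top (ENNReal.mul_ne_top (ENNReal.pow_ne_top hδ) hfin) hne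
  obtain ⟨J, hJ⟩ := ENNReal.exists_nat_gt hX
  have h1 : ν {x | x ∈ Q n ∧ x i = c} ≠ ⊤ := ne_top_of_le_ne_top hfin (measure_mono fun x hx => hx.1)
  have := key J
  rw [← ENNReal.le_div_iff_mul_le (Or.inl hne) (Or.inl h1)] at this
  exact absurd hJ (not_lt.2 this)

/-- The map onto the dyadic cell of generation `s` with position `j`. -/
noncomputable def cel {n : ℕ} (s : ℕ) (j : Fin n → ℤ) : (Fin n → ℝ) → (Fin n → ℝ) :=
  hom ((2 ^ s : ℝ)⁻¹ • fun i => (j i : ℝ)) ((2 ^ s : ℝ)⁻¹)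

theorem cel_apply {n : ℕ} (s : ℕ) (j : Fin n → ℤ) (x : Fin n → ℝ) (i : Fin n) :
    cel s j x i = (2 ^ s : ℝ)⁻¹ * (j i + x i) := by
  simp [cel, hom, mul_add]

theorem hom_hom {n : ℕ} (w : Fin n → ℝ) (t : ℝ) (w' : Fin n → ℝ) (t' : ℝ) (x : Fin n → ℝ) :
    hom w t (hom w' t' x) = hom (w + t • w') (t * t') x := by
  simp [hom, smul_smul, add_assoc]

theorem hom_image_hom {n : ℕ} (w : Fin n → ℝ) (t : ℝ) (w' : Fin n → ℝ) (t' : ℝ)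
    (S : Set (Fin n → ℝ)) :
    hom w t '' (hom w' t' '' S) = hom (w + t • w') (t * t') '' S := by
  rw [image_image]
  simp only [hom_hom]

theorem cel_cel {n : ℕ} (m s : ℕ) (j j' : Fin n → ℤ) (x : Fin n → ℝ) :
    cel m j (cel s j' x) = cel (m + s) (fun i => 2 ^ s * j i + j' i) x := by
  ext i
  simp only [cel_apply]
  push_cast
  rw [pow_add]
  field_simp
  ring

/-- Homothety as a homeomorphism. -/
noncomputable def homH {n : ℕ} (w : Fin n → ℝ) (t : ℝ) (ht : 0 < t) : (Fin n → ℝ) ≃ₜ (Fin n → ℝ) :=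
  (Homeomorph.smulOfNeZero t ht.ne').trans (Homeomorph.addLeft w)

theorem homH_coe {n : ℕ} (w : Fin n → ℝ) (t : ℝ) (ht : 0 < t) : ⇑(homH w t ht) = hom w t := rfl

theorem hom_ball {n : ℕ} (w : Fin n → ℝ) (t : ℝ) (ht : 0 < t) (y : Fin n → ℝ) (r : ℝ) :
    hom w t '' Metric.ball y r = Metric.ball (hom w t y) (t * r) := by
  have h := smul_ball ht.ne' y r
  have : hom w t '' Metric.ball y r = w +ᵥ (t • Metric.ball y r) := by
    ext z
    simp only [hom, Set.mem_image, Set.mem_vadd_set, Set.mem_smul_set]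
    constructor
    · rintro ⟨x, hx, rfl⟩; exact ⟨t • x, ⟨x, hx, rfl⟩, rfl⟩
    · rintro ⟨_, ⟨x, hx, rfl⟩, rfl⟩; exact ⟨x, hx, rfl⟩
  rw [this, h, Metric.vadd_ball, Real.norm_eq_abs, abs_of_pos ht]
  rfl

theorem cel_sub {n : ℕ} (s : ℕ) (j : Fin n → ℤ) (hj : ∀ i, 0 ≤ j i ∧ j i < 2 ^ s) :
    cel s j '' Q n ⊆ Q n := by
  rintro _ ⟨x, hx, rfl⟩
  rw [mem_Q] at hx ⊢
  intro i
  obtain ⟨h1, h2⟩ := hx i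
  obtain ⟨h3, h4⟩ := hj i
  have h3' : (0:ℝ) ≤ j i := by exact_mod_cast h3
  have h4' : (j i : ℝ) + 1 ≤ 2 ^ s := by exact_mod_cast h4
  rw [cel_apply]
  refine ⟨by positivity, ?_⟩
  rw [inv_mul_lt_iff₀ (by positivity)]
  linarith

theorem cel_disj {n : ℕ} (s : ℕ) (j j' : Fin n → ℤ) (hj : j ≠ j') :
    Disjoint (cel s j '' Q n) (cel s j' '' Q n) := by
  rw [Set.disjoint_left]
  rintro _ ⟨x, hx, rfl⟩ ⟨x', hx', h⟩
  apply hj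
  rw [mem_Q] at hx hx'
  ext i
  have h1 := congrFun h i
  simp only [cel_apply] at h1
  have h2 : (j' i : ℝ) + x' i = j i + x i := by
    have : ((2:ℝ) ^ s)⁻¹ ≠ 0 := by positivity
    exact mul_left_cancel₀ this h1
  have h3 := hx i
  have h4 := hx' i
  have h5 : j i < j' i + 1 := by
    have : (j i : ℝ) < j' i + 1 := by linarith
    exact_mod_cast this
  have h6 : j' i < j i + 1 := by
    have : (j' i : ℝ) < j i + 1 := by linarith
    exact_mod_cast this
  omega

/-- The positions of the cells of generation `m` that avoid `K`. -/
def Good {n : ℕ} (K : Set (Fin n → ℝ)) (m : ℕ) : Type :=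
  {j : Fin n → Fin (2 ^ m) // Disjoint (cel m (fun i => ((j i : ℕ) : ℤ)) '' Q n) K}

noncomputable instance {n : ℕ} (K : Set (Fin n → ℝ)) (m : ℕ) : Fintype (Good K m) := by
  classical
  unfold Good
  infer_instance

/-- The position. -/
def Good.pos {n : ℕ} {K : Set (Fin n → ℝ)} {m : ℕ} (j : Good K m) : Fin n → ℤ :=
  fun i => ((j.1 i : ℕ) : ℤ)

theorem Good.pos_inj {n : ℕ} {K : Set (Fin n → ℝ)} {m : ℕ} {j j' : Good K m}
    (h : j.pos = j'.pos) : j = j' := by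
  apply Subtype.ext
  ext i
  have := congrFun h i
  simpa [Good.pos] using this

theorem Good.range {n : ℕ} {K : Set (Fin n → ℝ)} {m : ℕ} (j : Good K m) (i : Fin n) :
    0 ≤ j.pos i ∧ j.pos i < 2 ^ m := by
  have := (j.1 i).2
  constructor
  · simp [Good.pos]
  · simp only [Good.pos]; exact_mod_cast this

theorem bad {n : ℕ} (ν : Measure (Fin n → ℝ)) (δ η : ℝ≥0∞) (hδ : δ ≠ ⊤)
    (hd : ∀ y r, 0 < r → ν (Metric.ball y (2 * r)) ≤ δ * ν (Metric.ball y r))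
    (hfin : ν (Q n) ≠ ⊤)
    {K : Set (Fin n → ℝ)} (ho : IsOpen K) (hc : Convex ℝ K) (hne : K.Nonempty)
    (m J : ℕ) (hJ0 : 0 < J) (hJ : 2 * J + 1 ≤ m) (hη : δ ^ 3 ≤ J * η) :
    ν (Q n) ≤ ν K + (∑ j : Good K m, ν (cel m j.pos '' Q n) + η * ν (Q n)) := by
  set E : Set (Fin n → ℝ) := {x | x ∈ Q n ∧ x ∉ K ∧ ∃ k ∈ K, dist x k ≤ (2 ^ m : ℝ)⁻¹} with hE
  have hEν : ν E ≤ η * ν (Q n) := by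
    have h1 := layer ν δ hd ho hc hne E (fun x hx => hx.1) (fun x hx => hx.2.1) m
      (fun x hx => hx.2.2) J hJ
    have h2 : (J : ℝ≥0∞) * ν E ≤ J * (η * ν (Q n)) := by
      rw [← mul_assoc]
      exact h1.trans (by gcongr)
    exact (ENNReal.mul_le_mul_iff_right (by simpa using hJ0.ne') (by simp)).1 h2
  set H : Set (Fin n → ℝ) := ⋃ (i : Fin n), ⋃ (l : ℤ), {x | x ∈ Q n ∧ x i = (2 ^ m : ℝ)⁻¹ * l} with hH
  have hHν : ν H = 0 := by
    rw [hH, measure_iUnion_null_iff]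
    intro i
    rw [measure_iUnion_null_iff]
    intro l
    exact hyper_null ν δ hδ hd hfin i _
  have hcov : Q n ⊆ K ∪ ((⋃ j : Good K m, cel m j.pos '' Q n) ∪ (E ∪ H)) := by
    intro x hx
    by_cases hxK : x ∈ K
    · exact Or.inl hxK
    by_cases hxH : x ∈ H
    · exact Or.inr (Or.inr (Or.inr hxH))
    refine Or.inr ?_
    have hp : (0:ℝ) < 2 ^ m := by positivity
    have hx' := (mem_Q x).1 hx
    have hxH' : ∀ i, ∀ l : ℤ, 2 ^ m * x i ≠ l := by
      intro i l hl
      apply hxH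
      simp only [hH, mem_iUnion]
      exact ⟨i, l, hx, by rw [← hl]; field_simp⟩
    have hfl : ∀ i, ∃ a : Fin (2 ^ m), (a : ℕ) < 2 ^ m * x i ∧ 2 ^ m * x i < (a : ℕ) + 1 := by
      intro i
      have h0 : 0 ≤ 2 ^ m * x i := by have := (hx' i).1; positivity
      refine ⟨⟨⌊2 ^ m * x i⌋₊, ?_⟩, ?_, ?_⟩
      · rw [Nat.floor_lt h0]
        push_cast
        have := (hx' i).2
        nlinarith
      · refine lt_of_le_of_ne (Nat.floor_le h0) fun h => hxH' i (⌊2 ^ m * x i⌋₊ : ℤ) ?_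
        rw [← h]; simp
      · exact Nat.lt_floor_add_one _
    choose a ha1 ha2 using hfl
    have hxc : x ∈ cel m (fun i => ((a i : ℕ) : ℤ)) '' Q n := by
      refine ⟨fun i => 2 ^ m * x i - (a i : ℕ), ?_, ?_⟩
      · rw [mem_Q]
        intro i
        have h1 := ha1 i
        have h2 := ha2 i
        constructor <;> linarith
      · ext i
        rw [cel_apply]
        push_cast
        field_simp
        ring
    by_cases hg : Disjoint (cel m (fun i => ((a i : ℕ) : ℤ)) '' Q n) K
    · left
      exact mem_iUnion.2 ⟨⟨a, hg⟩, hxc⟩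
    · right; left
      refine ⟨hx, hxK, ?_⟩
      rw [Set.not_disjoint_iff] at hg
      obtain ⟨k, ⟨z, hz, rfl⟩, hk⟩ := hg
      refine ⟨_, hk, ?_⟩
      obtain ⟨z', hz', rfl⟩ := hxc
      rw [dist_pi_le_iff (by positivity)]
      intro i
      rw [Real.dist_eq, cel_apply, cel_apply, ← mul_sub, abs_mul, abs_of_pos (by positivity)]
      have h1 := (mem_Q z).1 hz i
      have h2 := (mem_Q z').1 hz' i
      apply mul_le_of_le_one_right (by positivity)
      rw [abs_le]
      constructor <;> linarith
  calc ν (Q n) ≤ _ := measure_mono hcov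
    _ ≤ ν K + ν ((⋃ j : Good K m, cel m j.pos '' Q n) ∪ (E ∪ H)) := measure_union_le _ _
    _ ≤ ν K + (ν (⋃ j : Good K m, cel m j.pos '' Q n) + ν (E ∪ H)) := by
        gcongr; exact measure_union_le _ _
    _ ≤ _ := by
        gcongr
        · exact measure_iUnion_fintype_le _ _
        · exact (measure_union_le _ _).trans (by rw [hHν, add_zero]; exact hEν)

theorem bad_hom {n : ℕ} (ν : Measure (Fin n → ℝ)) (δ η : ℝ≥0∞) (hδ : δ ≠ ⊤)
    (hd : ∀ y r, 0 < r → ν (Metric.ball y (2 * r)) ≤ δ * ν (Metric.ball y r))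
    (hfin : ∀ y r, ν (Metric.ball y r) ≠ ⊤)
    {K : Set (Fin n → ℝ)} (ho : IsOpen K) (hc : Convex ℝ K) (hne : K.Nonempty)
    (m J : ℕ) (hJ0 : 0 < J) (hJ : 2 * J + 1 ≤ m) (hη : δ ^ 3 ≤ J * η)
    (w : Fin n → ℝ) (t : ℝ) (ht : 0 < t) :
    ν (hom w t '' Q n) ≤ ν (hom w t '' K) +
      (∑ j : Good K m, ν (hom w t '' (cel m j.pos '' Q n)) + η * ν (hom w t '' Q n)) := by
  have hme := (homH w t ht).measurableEmbedding
  have hap : ∀ S, ν.comap (hom w t) S = ν (hom w t '' S) := fun S => hme.comap_apply ν S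
  have := bad (ν.comap (hom w t)) δ η hδ (fun y r hr => ?_) ?_ ho hc hne m J hJ0 hJ hη
  · simpa only [hap] using this
  · rw [hap, hap, hom_ball _ _ ht, hom_ball _ _ ht]
    have := hd (hom w t y) (t * r) (by positivity)
    rwa [show t * (2 * r) = 2 * (t * r) by ring]
  · rw [hap, Q, hom_ball _ _ ht]
    exact hfin _ _

theorem core {n : ℕ} (ν : Measure (Fin n → ℝ)) (hfin : ∀ y r, ν (Metric.ball y r) ≠ ⊤)
    {K : Set (Fin n → ℝ)} (hKQ : K ⊆ Q n) (m : ℕ) (ρ ξ : ℝ) (hρ0 : 0 ≤ ρ) (hξ1 : ξ ≤ 1)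
    (hden : ∀ w t, 0 < t → ENNReal.ofReal ρ * ν (hom w t '' Q n) ≤ ν (hom w t '' K))
    (hbad : ∀ w t, 0 < t → ν (hom w t '' Q n) ≤ ν (hom w t '' K) +
      (∑ j : Good K m, ν (hom w t '' (cel m j.pos '' Q n)) +
        ENNReal.ofReal (1 - ξ) * ν (hom w t '' Q n)))
    (a : ℕ → ℝ) (ha0 : a 0 = ρ) (ha : ∀ N, a (N + 1) = ρ + (ξ - ρ) * a N)
    (ha1 : ∀ N, 0 ≤ a N ∧ a N ≤ 1) (N : ℕ) :
    ∀ w t, 0 < t → ∃ (ι : Type) (_ : Fintype ι) (s : ι → ℕ) (j : ι → Fin n → ℤ),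
      (∀ b, s b ≤ N * m) ∧ (∀ b i, 0 ≤ j b i ∧ j b i < 2 ^ s b) ∧
      Pairwise (Function.onFun Disjoint fun b => cel (s b) (j b) '' K) ∧
      ENNReal.ofReal (a N) * ν (hom w t '' Q n) ≤
        ∑ b, ν (hom w t '' (cel (s b) (j b) '' K)) := by
  have hcel0 : ∀ S : Set (Fin n → ℝ), cel 0 0 '' S = S := by
    intro S
    have : cel (n := n) 0 0 = id := by
      ext x i; simp [cel_apply]
    rw [this, image_id]
  have hcoe : ∀ w t, 0 < t → ν (hom w t '' Q n) ≠ ⊤ := by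
    intro w t ht
    rw [Q, hom_ball w t ht]
    exact hfin _ _
  induction N with
  | zero =>
    intro w t ht
    refine ⟨Unit, inferInstance, fun _ => 0, fun _ => 0, by simp, by simp, ?_, ?_⟩
    · intro b b' h; exact absurd (Subsingleton.elim b b') h
    · simp only [hcel0, ha0]
      simpa using hden w t ht
  | succ N ih =>
    intro w t ht
    have ih' := fun g : Good K m => ih (w + t • ((2 ^ m : ℝ)⁻¹ • fun i => (g.pos i : ℝ)))
      (t * (2 ^ m : ℝ)⁻¹) (by positivity)
    choose ι hι s j hs hj hdis hsum using ih'
    have hKcel : ∀ g b, cel (m + s g b) (fun i => 2 ^ (s g b) * g.pos i + j g b i) '' K =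
        cel m g.pos '' (cel (s g b) (j g b) '' K) := by
      intro g b
      rw [image_image]
      simp only [cel_cel]
    have hsubQ : ∀ g b, cel m g.pos '' (cel (s g b) (j g b) '' K) ⊆ cel m g.pos '' Q n := by
      intro g b
      apply image_mono
      exact (image_mono hKQ).trans (cel_sub _ _ (hj g b))
    have hKd : ∀ g : Good K m, Disjoint K (cel m g.pos '' Q n) := fun g => g.2.symm
    refine ⟨Option (Σ g : Good K m, ι g), inferInstance,
      fun o => o.elim 0 fun p => m + s p.1 p.2,
      fun o => o.elim 0 fun p => fun i => 2 ^ (s p.1 p.2) * p.1.pos i + j p.1 p.2 i, ?_, ?_, ?_, ?_⟩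
    · rintro (_ | ⟨g, b⟩)
      · simp
      · have := hs g b
        simp only [Option.elim]
        rw [Nat.succ_mul]; omega
    · rintro (_ | ⟨g, b⟩) i
      · simp
      · simp only [Option.elim]
        have h1 := g.range i
        have h2 := hj g b i
        have h3 : (0:ℤ) < 2 ^ (s g b) := by positivity
        rw [pow_add]
        constructor
        · have := mul_nonneg h3.le h1.1
          linarith
        · have h4 : g.pos i + 1 ≤ 2 ^ m := h1.2
          nlinarith [mul_le_mul_of_nonneg_left h4 h3.le]
    · rintro (_ | ⟨g, b⟩) (_ | ⟨g', b'⟩) hne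
      · exact absurd rfl hne
      · simp only [Function.onFun, Option.elim, hcel0, hKcel]
        exact (hKd g').mono_right (hsubQ g' b')
      · simp only [Function.onFun, Option.elim, hcel0, hKcel]
        exact ((hKd g).mono_right (hsubQ g b)).symm
      · simp only [Function.onFun, Option.elim, hKcel]
        by_cases hg : g = g'
        · subst hg
          have hb : b ≠ b' := fun h => hne (by rw [h])
          refine (Set.disjoint_image_iff ?_).2 (hdis g hb)
          exact (homH _ ((2 ^ m : ℝ)⁻¹) (by positivity)).injective
        · refine (cel_disj m g.pos g'.pos (fun h => hg (Good.pos_inj h))).mono (hsubQ g b) (hsubQ g' b')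
    · rw [Fintype.sum_option, Fintype.sum_sigma]
      simp only [Option.elim, hcel0, hKcel]
      have hsum' : ∀ g : Good K m, ENNReal.ofReal (a N) * ν (hom w t '' (cel m g.pos '' Q n)) ≤
          ∑ b, ν (hom w t '' (cel m g.pos '' (cel (s g b) (j g b) '' K))) := by
        intro g
        have := hsum g
        simp only [← hom_image_hom] at this
        exact this
      refine le_trans ?_ (add_le_add le_rfl (Finset.sum_le_sum fun g _ => hsum' g))
      rw [← Finset.mul_sum]
      have hb := hbad w t ht
      have hd := hden w t ht
      have hqt := hcoe w t ht
      have hkt : ν (hom w t '' K) ≠ ⊤ := ne_top_of_le_ne_top hqt (measure_mono (image_mono hKQ))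
      have hgt : ∑ g : Good K m, ν (hom w t '' (cel m g.pos '' Q n)) ≠ ⊤ := by
        rw [ENNReal.sum_ne_top]
        intro g _
        exact ne_top_of_le_ne_top hqt (measure_mono (image_mono (cel_sub _ _ g.range)))
      generalize ν (hom w t '' Q n) = q at *
      generalize ν (hom w t '' K) = k at *
      generalize ∑ g : Good K m, ν (hom w t '' (cel m g.pos '' Q n)) = g at *
      lift q to NNReal using hqt
      lift k to NNReal using hkt
      lift g to NNReal using hgt
      have e : ∀ x : NNReal, (x : ℝ≥0∞) = ENNReal.ofReal (x : ℝ) := fun x => by simp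
      rw [e q, e k, e g] at *
      have hq := NNReal.coe_nonneg q
      have hk := NNReal.coe_nonneg k
      have hg := NNReal.coe_nonneg g
      have hα := ha1 N
      have hα1 := ha1 (N + 1)
      rw [← ENNReal.ofReal_mul hρ0, ENNReal.ofReal_le_ofReal_iff hk] at hd
      rw [← ENNReal.ofReal_mul (by linarith), ← ENNReal.ofReal_add hg (mul_nonneg (by linarith) hq),
        ← ENNReal.ofReal_add hk (add_nonneg hg (mul_nonneg (by linarith) hq)),
        ENNReal.ofReal_le_ofReal_iff (add_nonneg hk (add_nonneg hg (mul_nonneg (by linarith) hq)))] at hb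
      rw [← ENNReal.ofReal_mul hα1.1, ← ENNReal.ofReal_mul hα.1,
        ← ENNReal.ofReal_add hk (mul_nonneg hα.1 hg)]
      apply ENNReal.ofReal_le_ofReal
      rw [ha]
      have h1 := mul_le_mul_of_nonneg_left hb hα.1
      have h2 := mul_le_mul_of_nonneg_left hd (sub_nonneg.2 hα.2)
      nlinarith

theorem affine_image {n : ℕ} (G : (Fin n → ℝ) ≃ᵃ[ℝ] EuclideanSpace ℝ (Fin n))
    (w : Fin n → ℝ) (t : ℝ) (S : Set (Fin n → ℝ)) :
    G '' (hom w t '' S) = (G w - t • G 0) +ᵥ t • (G '' S) := by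
  have hG : ∀ x, G x = G.linear x + G 0 := by
    intro x
    have := G.map_vadd 0 x
    simpa using this
  have key : ∀ x, G (hom w t x) = (G w - t • G 0) + t • G x := by
    intro x
    rw [hG (hom w t x), hG x, hG w]
    simp only [hom, map_add, map_smul, smul_add]
    abel
  ext z
  simp only [Set.mem_image, Set.mem_vadd_set, Set.mem_smul_set, vadd_eq_add]
  constructor
  · rintro ⟨_, ⟨x, hx, rfl⟩, rfl⟩
    exact ⟨t • G x, ⟨G x, ⟨x, hx, rfl⟩, rfl⟩, (key x).symm⟩
  · rintro ⟨_, ⟨_, ⟨x, hx, rfl⟩, rfl⟩, rfl⟩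
    exact ⟨_, ⟨x, hx, rfl⟩, key x⟩

theorem mem_vs {n : ℕ} (y z : EuclideanSpace ℝ (Fin n)) (t : ℝ)
    (S : Set (EuclideanSpace ℝ (Fin n))) :
    z ∈ y +ᵥ t • S ↔ ∃ x ∈ S, z = y + t • x := by
  simp only [Set.mem_vadd_set, Set.mem_smul_set, vadd_eq_add]
  constructor
  · rintro ⟨_, ⟨x, hx, rfl⟩, rfl⟩; exact ⟨x, hx, rfl⟩
  · rintro ⟨x, hx, rfl⟩; exact ⟨_, ⟨x, hx, rfl⟩, rfl⟩

theorem dens_pow {n : ℕ} {𝔅 : Set (Set (EuclideanSpace ℝ (Fin n)))}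
    (hB : ∀ B ∈ 𝔅, IsConvexBasisSet B) (hhom : HomothecyInvariant 𝔅)
    {μ : Measure (EuclideanSpace ℝ (Fin n))} {Δ : ℝ} (hdbl : DoublingWrt μ 𝔅 Δ)
    {B : Set (EuclideanSpace ℝ (Fin n))} (hBm : B ∈ 𝔅) {z : EuclideanSpace ℝ (Fin n)}
    (hz : z ∈ B) (k : ℕ) :
    μ ((z - (2 ^ k : ℝ) • z) +ᵥ (2 ^ k : ℝ) • B) ≤ ENNReal.ofReal Δ ^ k * μ B := by
  induction k with
  | zero => simp
  | succ k ih =>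
    have hmem : ((z - (2 ^ k : ℝ) • z) +ᵥ (2 ^ k : ℝ) • B) ∈ 𝔅 :=
      (hhom _ ((hhom B hBm).2 _ (by positivity))).1 _
    have heq : (z - (2 ^ (k+1) : ℝ) • z) +ᵥ (2 ^ (k+1) : ℝ) • B =
        (-z) +ᵥ (2:ℝ) • ((z - (2 ^ k : ℝ) • z) +ᵥ (2 ^ k : ℝ) • B) := by
      ext p
      simp only [mem_vs]
      constructor
      · rintro ⟨x, hx, rfl⟩
        refine ⟨_, ⟨x, hx, rfl⟩, ?_⟩
        rw [pow_succ]; module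
      · rintro ⟨_, ⟨x, hx, rfl⟩, rfl⟩
        refine ⟨x, hx, ?_⟩
        rw [pow_succ]; module
    have hsub : ((z - (2 ^ k : ℝ) • z) +ᵥ (2 ^ k : ℝ) • B) ⊆
        (-z) +ᵥ (2:ℝ) • ((z - (2 ^ k : ℝ) • z) +ᵥ (2 ^ k : ℝ) • B) := by
      rw [← heq]
      intro p hp
      rw [mem_vs] at hp ⊢
      obtain ⟨x, hx, rfl⟩ := hp
      refine ⟨(1/2:ℝ) • z + (1/2:ℝ) • x,
        (hB B hBm).2.2.2 hz hx (by norm_num) (by norm_num) (by norm_num), ?_⟩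
      rw [pow_succ]; module
    rw [heq]
    calc _ ≤ ENNReal.ofReal Δ * μ ((z - (2 ^ k : ℝ) • z) +ᵥ (2 ^ k : ℝ) • B) :=
          hdbl _ hmem _ hsub
      _ ≤ ENNReal.ofReal Δ * (ENNReal.ofReal Δ ^ k * μ B) := by gcongr
      _ = _ := by ring

theorem dens {n : ℕ} (hn : 1 ≤ n) {𝔅 : Set (Set (EuclideanSpace ℝ (Fin n)))}
    (hB : ∀ B ∈ 𝔅, IsConvexBasisSet B) (hhom : HomothecyInvariant 𝔅)
    {μ : Measure (EuclideanSpace ℝ (Fin n))} {Δ : ℝ} (hΔ : 1 < Δ) (hdbl : DoublingWrt μ 𝔅 Δ)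
    {B R : Set (EuclideanSpace ℝ (Fin n))} (hBm : B ∈ 𝔅)
    (hRB : ∃ z ∈ B, R ⊆ (fun x => z + ((n : ℝ) ^ (3 / 2 : ℝ)) • (x - z)) '' B)
    (y : EuclideanSpace ℝ (Fin n)) (t : ℝ) (ht : 0 < t) :
    ENNReal.ofReal (Δ ^ (-⌈(3 / 2 : ℝ) * Real.logb 2 n⌉)) * μ (y +ᵥ t • R) ≤ μ (y +ᵥ t • B) := by
  obtain ⟨z, hz, hR⟩ := hRB
  have hn' : (1:ℝ) ≤ n := by exact_mod_cast hn
  have hlog : 0 ≤ (3 / 2 : ℝ) * Real.logb 2 n :=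
    mul_nonneg (by norm_num) (Real.logb_nonneg (by norm_num) hn')
  obtain ⟨k, hk⟩ := Int.eq_ofNat_of_zero_le (Int.ceil_nonneg hlog)
  have hlam : (n : ℝ) ^ (3 / 2 : ℝ) ≤ 2 ^ k := by
    have h1 : (3 / 2 : ℝ) * Real.logb 2 n ≤ k := by
      have := Int.le_ceil ((3 / 2 : ℝ) * Real.logb 2 n)
      rw [hk] at this
      exact_mod_cast this
    have h2 : (n : ℝ) = 2 ^ (Real.logb 2 n) :=
      (Real.rpow_logb (by norm_num) (by norm_num) (by linarith)).symm
    rw [h2, ← Real.rpow_mul (by norm_num), ← Real.rpow_natCast]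
    apply Real.rpow_le_rpow_of_exponent_le (by norm_num)
    linarith
  have hBm' : (y +ᵥ t • B) ∈ 𝔅 := (hhom _ ((hhom B hBm).2 _ ht)).1 _
  have hz' : y + t • z ∈ y +ᵥ t • B := (mem_vs _ _ _ _).2 ⟨z, hz, rfl⟩
  have hmain := dens_pow hB hhom hdbl hBm' hz' k
  have hsub : y +ᵥ t • R ⊆ ((y + t • z) - (2 ^ k : ℝ) • (y + t • z)) +ᵥ (2 ^ k : ℝ) • (y +ᵥ t • B) := by
    intro p hp
    rw [mem_vs] at hp ⊢
    obtain ⟨r, hr, rfl⟩ := hp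
    obtain ⟨x, hx, rfl⟩ := hR hr
    set l := (n : ℝ) ^ (3 / 2 : ℝ) with hl
    have hl0 : 0 ≤ l := by positivity
    have h2k : (0:ℝ) < 2 ^ k := by positivity
    have hx' : (1 - l / 2 ^ k) • z + (l / 2 ^ k) • x ∈ B :=
      (hB B hBm).2.2.2 hz hx (sub_nonneg.2 ((div_le_one h2k).2 hlam)) (by positivity) (by ring)
    refine ⟨_, (mem_vs _ _ _ _).2 ⟨_, hx', rfl⟩, ?_⟩
    have e : l = 2 ^ k * (l / 2 ^ k) := by field_simp
    generalize hq : l / 2 ^ k = q at *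
    simp only [e]
    module
  rw [hk]
  have hΔ0 : 0 < Δ := by linarith
  calc _ ≤ ENNReal.ofReal (Δ ^ (-(k : ℤ))) * (ENNReal.ofReal Δ ^ k * μ (y +ᵥ t • B)) := by
        gcongr
        exact (measure_mono hsub).trans hmain
    _ = μ (y +ᵥ t • B) := by
        rw [← mul_assoc, ← ENNReal.ofReal_pow hΔ0.le, ← ENNReal.ofReal_mul (by positivity)]
        rw [zpow_neg, zpow_natCast, inv_mul_cancel₀ (by positivity)]
        simp

theorem stdBox_zero (n : ℕ) : stdBox n 0 0 = Q n := by
  ext x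
  rw [mem_Q]
  simp [stdBox]

theorem stdBox_cel (n s : ℕ) (j : Fin n → ℤ) : stdBox n (-(s : ℤ)) j = cel s j '' Q n := by
  have h2 : (0:ℝ) < 2 ^ s := by positivity
  ext x
  simp only [stdBox, mem_setOf_eq, zpow_neg, zpow_natCast, Set.mem_image]
  constructor
  · intro h
    refine ⟨fun i => 2 ^ s * x i - j i, ?_, ?_⟩
    · rw [mem_Q]
      intro i
      obtain ⟨h1, h3⟩ := h i
      rw [← div_eq_mul_inv, div_lt_iff₀ h2] at h1
      rw [← div_eq_mul_inv, lt_div_iff₀ h2] at h3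
      constructor <;> linarith
    · ext i
      rw [cel_apply]
      field_simp
      ring
  · rintro ⟨q, hq, rfl⟩ i
    rw [mem_Q] at hq
    obtain ⟨h1, h3⟩ := hq i
    rw [cel_apply, mul_comm (2 ^ s : ℝ)⁻¹]
    constructor
    · exact mul_lt_mul_of_pos_right (by linarith) (by positivity)
    · exact mul_lt_mul_of_pos_right (by linarith) (by positivity)

/-- The rectangle is the image of the unit cube under a good affine parametrization. -/
theorem exists_param {n : ℕ} {R : Set (EuclideanSpace ℝ (Fin n))} (hR : IsRect R) :
    ∃ G : (Fin n → ℝ) ≃ᵃ[ℝ] EuclideanSpace ℝ (Fin n), IsRectParam G ∧ G '' Q n = R := by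
  obtain ⟨f, S, ⟨a, b, hab, rfl⟩, rfl⟩ := hR
  have hl : ∀ i, 0 < b i - a i := fun i => sub_pos.2 (hab i)
  let L : (Fin n → ℝ) ≃ₗ[ℝ] (Fin n → ℝ) :=
    LinearEquiv.piCongrRight fun i => LinearEquiv.smulOfNeZero ℝ ℝ (b i - a i) (hl i).ne'
  let G : (Fin n → ℝ) ≃ᵃ[ℝ] EuclideanSpace ℝ (Fin n) :=
    ((L.trans (WithLp.linearEquiv 2 ℝ (Fin n → ℝ)).symm).toAffineEquiv.trans
      (AffineEquiv.constVAdd ℝ _ (WithLp.toLp 2 a))).trans f.toRealAffineIsometryEquiv.toAffineEquiv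
  have hG : ∀ x, G x = f (WithLp.toLp 2 a + WithLp.toLp 2 (fun i => (b i - a i) * x i)) := by
    intro x
    simp only [G, L, AffineEquiv.trans_apply]
    rfl
  refine ⟨G, ⟨(IsometryEquiv.addLeft (WithLp.toLp 2 a)).trans f, fun i => b i - a i, hl, ?_⟩, ?_⟩
  · intro x
    rw [hG]
    rfl
  · ext z
    simp only [Set.mem_image, hG, mem_Q, mem_setOf_eq, mem_Ioo]
    constructor
    · rintro ⟨x, hx, rfl⟩
      refine ⟨_, fun i => ?_, rfl⟩
      obtain ⟨h1, h2⟩ := hx i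
      have h3 := hl i
      simp only [PiLp.add_apply]
      constructor
      · have := mul_pos h3 h1; linarith
      · nlinarith
    · rintro ⟨x, hx, rfl⟩
      refine ⟨fun i => (x i - a i) / (b i - a i), fun i => ?_, ?_⟩
      · obtain ⟨h1, h2⟩ := hx i
        have h3 := hl i
        constructor
        · apply div_pos _ h3; linarith
        · rw [div_lt_one h3]; linarith
      · congr 1
        ext i
        have h3 := (hl i).ne'
        simp only [PiLp.add_apply]
        field_simp
        ring

theorem cube_dbl {n : ℕ} {μ : Measure (EuclideanSpace ℝ (Fin n))}
    {R : Set (EuclideanSpace ℝ (Fin n))}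
    (T : EuclideanSpace ℝ (Fin n) ≃ᵃ[ℝ] EuclideanSpace ℝ (Fin n))
    (hT : T '' R = {x | ∀ i, x i ∈ Set.Ioo (0 : ℝ) 1})
    (δ : ℝ) (hdbl : DoublingWrt (μ.map T) {C | IsAxisCube C} δ)
    (G : (Fin n → ℝ) ≃ᵃ[ℝ] EuclideanSpace ℝ (Fin n)) (hG : G '' Q n = R)
    (y : Fin n → ℝ) (r : ℝ) (hr : 0 < r) :
    μ (G '' Metric.ball y (2 * r)) ≤ ENNReal.ofReal δ * μ (G '' Metric.ball y r) := by
  set h := G.trans T with hh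
  have hhQ : h '' Q n = {x | ∀ i, x i ∈ Set.Ioo (0 : ℝ) 1} := by
    rw [← hT, ← hG, image_image]; rfl
  have hmap : ∀ S : Set (Fin n → ℝ), μ.map T (h '' S) = μ (G '' S) := by
    intro S
    have h1 := T.toHomeomorphOfFiniteDimensional.measurableEmbedding.map_apply μ (h '' S)
    have h2 : (T.toHomeomorphOfFiniteDimensional : EuclideanSpace ℝ (Fin n) → _) = T := rfl
    rw [h2] at h1
    rw [h1]
    congr 1
    have : h '' S = T '' (G '' S) := by rw [image_image]; rfl
    rw [this, preimage_image_eq _ T.injective]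
  have hball : Metric.ball y r = hom (y - (2 * r) • fun _ => (1/2:ℝ)) (2 * r) '' Q n := by
    rw [Q, hom_ball _ _ (by positivity)]
    congr 1
    · simp [hom]
    · ring
  have hball2 : Metric.ball y (2 * r) = hom (-y) 2 '' Metric.ball y r := by
    rw [hom_ball _ _ (by positivity)]
    congr 1
    simp only [hom]
    module
  have hcube : IsAxisCube (h '' Metric.ball y r) := by
    rw [hball, affine_image, hhQ]
    generalize h (y - (2 * r) • fun _ => (1/2:ℝ)) - (2 * r) • h 0 = a
    refine ⟨fun i => a i, 2 * r, by positivity, ?_⟩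
    ext z
    rw [mem_vs]
    simp only [mem_setOf_eq, mem_Ioo]
    constructor
    · rintro ⟨x, hx, rfl⟩ i
      obtain ⟨h1, h2⟩ := hx i
      simp only [PiLp.add_apply, PiLp.smul_apply, smul_eq_mul]
      constructor <;> nlinarith
    · intro hz
      refine ⟨(2 * r)⁻¹ • (z - a), fun i => ?_, ?_⟩
      · obtain ⟨h1, h2⟩ := hz i
        simp only [PiLp.sub_apply, PiLp.smul_apply, smul_eq_mul]
        constructor
        · apply mul_pos (by positivity); linarith
        · rw [inv_mul_lt_iff₀ (by positivity)]; linarith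
      · rw [smul_smul, mul_inv_cancel₀ (by positivity)]; simp
  have heq : h '' Metric.ball y (2 * r) = (h (-y) - (2:ℝ) • h 0) +ᵥ (2:ℝ) • (h '' Metric.ball y r) := by
    rw [hball2, affine_image]
  have := hdbl _ hcube (h (-y) - (2:ℝ) • h 0) (by
    rw [← heq]
    exact image_mono (Metric.ball_subset_ball (by linarith)))
  rwa [← heq, hmap, hmap] at this

end HC

/-- Lemma `l.homcopies` of the paper. Let `𝔅` be a homothecy
invariant basis of nonempty bounded open convex sets, `μ` nonzero locally finite and
doubling w.r.t. `𝔅` with constant `Δ`, and `ρ = Δ^{-⌈(3/2)·log₂ n⌉}`. Let `B ∈ 𝔅` with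
associated rectangle `R ⊇ B` contained in the image of `B` under a homothety of ratio
`n^{3/2}` centered at a point of `B`. Let the affine equivalence `T` map `R` onto the
open unit cube, let `δ > 1` be a doubling constant of the pushforward `μ ∘ T⁻¹` with
respect to axis-parallel cubes, and let `m ≥ 1` be so large that `√n·2^{-m} < 1` and
`ξ_m > ρ`, where `ξ_m = 1 - 9·δ^{4+⌈log₂(34√n)⌉}·(log₂(2^m/√n))⁻¹`; set `Ψ = ξ_m - ρ`.
Then for every `N ≥ 1` there is a finite pairwise disjoint family of homothetic copies
of `B` inside `R`, whose associated rectangles are dyadic descendants of `R` of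
generation at most `N·m`, whose union `B_N` satisfies
`μ(B_N) ≥ ρ·(1-Ψ^{N+1})/(1-Ψ)·μ(R)`. -/
theorem statement18 (n : ℕ) (𝔅 : Set (Set (EuclideanSpace ℝ (Fin n))))
    (hB : ∀ B ∈ 𝔅, IsConvexBasisSet B) (hhom : HomothecyInvariant 𝔅)
    (μ : Measure (EuclideanSpace ℝ (Fin n)))
    (hloc : IsLocallyFiniteMeasure μ) (hμ : μ ≠ 0)
    (Δ : ℝ) (hΔ : 1 < Δ) (hdbl : DoublingWrt μ 𝔅 Δ)
    (B R : Set (EuclideanSpace ℝ (Fin n))) (hBmem : B ∈ 𝔅)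
    (hRrect : IsRect R) (hBR : B ⊆ R)
    (hRB : ∃ z ∈ B, R ⊆ (fun x => z + ((n : ℝ) ^ (3 / 2 : ℝ)) • (x - z)) '' B)
    (T : EuclideanSpace ℝ (Fin n) ≃ᵃ[ℝ] EuclideanSpace ℝ (Fin n))
    (hT : T '' R = {x | ∀ i, x i ∈ Set.Ioo (0 : ℝ) 1})
    (δ : ℝ) (hδ : 1 < δ)
    (hdblcube : DoublingWrt (μ.map T) {C | IsAxisCube C} δ)
    (ρ ξ Ψ : ℝ)
    (hρ : ρ = Δ ^ (-⌈(3 / 2 : ℝ) * Real.logb 2 n⌉))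
    (m : ℕ) (hm : 0 < m) (hsmall : Real.sqrt n * (2 : ℝ) ^ (-(m : ℤ)) < 1)
    (hξ : ξ = 1 - 9 * δ ^ ((4 : ℤ) + ⌈Real.logb 2 (34 * Real.sqrt n)⌉) *
      (Real.logb 2 ((2 : ℝ) ^ m / Real.sqrt n))⁻¹)
    (hξρ : ρ < ξ) (hΨ : Ψ = ξ - ρ) :
    ∀ N : ℕ, 0 < N →
      ∃ (k : ℕ) (c : Fin k → Set (EuclideanSpace ℝ (Fin n))),
        (∀ a : Fin k, ∃ (y : EuclideanSpace ℝ (Fin n)) (t : ℝ), 0 < t ∧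
          c a = y +ᵥ t • B ∧
          ∃ s : ℕ, s ≤ N * m ∧ DyadicDescendant R (y +ᵥ t • R) s) ∧
        Pairwise (Function.onFun Disjoint c) ∧
        (⋃ a, c a) ⊆ R ∧
        ENNReal.ofReal (ρ * (1 - Ψ ^ (N + 1)) / (1 - Ψ)) * μ R ≤ μ (⋃ a, c a) := by
  have hn : 1 ≤ n := by
    by_contra h
    have h0 : n = 0 := by omega
    subst h0
    simp at hρ hξ
    linarith
  have hn' : (1:ℝ) ≤ n := by exact_mod_cast hn
  have hsq : 1 ≤ Real.sqrt n := Real.one_le_sqrt.2 hn'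
  have hρ0 : 0 < ρ := by rw [hρ]; positivity
  have hδ0 : 0 < δ := by linarith
  -- numerics
  set L := Real.logb 2 ((2 : ℝ) ^ m / Real.sqrt n) with hL
  have h2m : (0:ℝ) < 2 ^ m := by positivity
  have hL0 : 0 < L := by
    apply Real.logb_pos (by norm_num)
    rw [zpow_neg, zpow_natCast, ← div_eq_mul_inv, div_lt_one h2m] at hsmall
    rw [lt_div_iff₀ (by linarith)]
    linarith
  have hLm : L ≤ m := by
    have h1 : L ≤ Real.logb 2 ((2:ℝ) ^ m) := by
      apply Real.logb_le_logb_of_le (by norm_num) (by positivity)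
      exact div_le_self h2m.le hsq
    rwa [Real.logb_pow, Real.logb_self_eq_one (by norm_num), mul_one] at h1
  have hpow : δ ^ 4 ≤ δ ^ ((4 : ℤ) + ⌈Real.logb 2 (34 * Real.sqrt n)⌉) := by
    have h1 : 0 ≤ ⌈Real.logb 2 (34 * Real.sqrt n)⌉ :=
      Int.ceil_nonneg (Real.logb_nonneg (by norm_num) (by linarith))
    rw [← zpow_natCast]
    exact zpow_le_zpow_right₀ hδ.le (by push_cast; linarith)
  have hδ3 : 1 ≤ δ ^ 3 := one_le_pow₀ hδ.le
  have hδ34 : δ ^ 3 ≤ δ ^ 4 := pow_le_pow_right₀ hδ.le (by norm_num)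
  generalize δ ^ ((4 : ℤ) + ⌈Real.logb 2 (34 * Real.sqrt n)⌉) = D at *
  have hη : (1 - ξ) * L = 9 * D := by
    rw [hξ]; field_simp; ring
  have hξ1 : ξ < 1 := by
    by_contra hcon
    push Not at hcon
    have := mul_nonneg (sub_nonneg.2 hcon) hL0.le
    linarith
  have hm9 : (9:ℝ) < m := by
    have h1 : (1 - ξ) * L < 1 * L := mul_lt_mul_of_pos_right (by linarith) hL0
    linarith
  have hm9' : 9 < m := by exact_mod_cast hm9
  have hJm : (m : ℝ) ≤ 4 * ((m - 1) / 2 : ℕ) := by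
    have : m ≤ 4 * ((m - 1) / 2) := by omega
    exact_mod_cast this
  set J := (m - 1) / 2 with hJ
  have hJη : δ ^ 3 ≤ J * (1 - ξ) := by
    have h1 : (1 - ξ) * L ≤ (1 - ξ) * m := mul_le_mul_of_nonneg_left hLm (by linarith)
    have h2 : (1 - ξ) * m ≤ (1 - ξ) * (4 * J) := mul_le_mul_of_nonneg_left hJm (by linarith)
    nlinarith
  -- parametrization
  obtain ⟨G, hGp, hGQ⟩ := HC.exists_param hRrect
  have hGc : Continuous G := G.toAffineMap.continuous_of_finiteDimensional
  have hGs : Continuous G.symm := G.symm.toAffineMap.continuous_of_finiteDimensional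
  let GH : (Fin n → ℝ) ≃ₜ EuclideanSpace ℝ (Fin n) :=
    { G.toEquiv with continuous_toFun := hGc, continuous_invFun := hGs }
  have hap : ∀ S, μ.comap G S = μ (G '' S) := fun S => GH.measurableEmbedding.comap_apply μ S
  set K : Set (Fin n → ℝ) := G ⁻¹' B with hK
  have hGK : G '' K = B := image_preimage_eq _ G.surjective
  obtain ⟨hBne, hBbd, hBo, hBc⟩ := hB B hBmem
  have hKo : IsOpen K := hBo.preimage hGc
  have hKc : Convex ℝ K := hBc.affine_preimage G.toAffineMap
  have hKne : K.Nonempty := by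
    rw [← hGK] at hBne
    exact hBne.of_image
  have hKQ : K ⊆ HC.Q n := by
    intro x hx
    have h1 : G x ∈ G '' HC.Q n := by rw [hGQ]; exact hBR hx
    exact (G.injective.mem_set_image).1 h1
  have hd : ∀ y r, 0 < r → μ.comap G (Metric.ball y (2 * r)) ≤
      ENNReal.ofReal δ * μ.comap G (Metric.ball y r) := by
    intro y r hr
    rw [hap, hap]
    exact HC.cube_dbl T hT δ hdblcube G hGQ y r hr
  have hfin : ∀ y r, μ.comap G (Metric.ball y r) ≠ ⊤ := by
    intro y r
    rw [hap]
    have h1 : μ (G '' Metric.closedBall y r) < ⊤ :=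
      ((isCompact_closedBall y r).image hGc).measure_lt_top
    exact ne_top_of_le_ne_top h1.ne (measure_mono (image_mono Metric.ball_subset_closedBall))
  have hΨ0 : 0 < Ψ := by linarith
  have hΨ1 : 0 < 1 - Ψ := by linarith
  have hΨp : ∀ N : ℕ, Ψ ^ (N + 1) ≤ 1 := fun N => pow_le_one₀ hΨ0.le (by linarith)
  intro N _
  have hcore := HC.core (μ.comap G) hfin hKQ m ρ ξ hρ0.le hξ1.le
    (fun w t ht => by
      rw [hap, hap, HC.affine_image, HC.affine_image, hGQ, hGK, hρ]
      exact HC.dens hn hB hhom hΔ hdbl hBmem hRB _ t ht)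
    (fun w t ht => HC.bad_hom (μ.comap G) (ENNReal.ofReal δ) (ENNReal.ofReal (1 - ξ))
      ENNReal.ofReal_ne_top hd hfin hKo hKc hKne m J (by omega) (by omega)
      (by
        rw [← ENNReal.ofReal_pow hδ0.le, ← ENNReal.ofReal_natCast, ← ENNReal.ofReal_mul (by positivity)]
        exact ENNReal.ofReal_le_ofReal hJη) w t ht)
    (fun N => ρ * (1 - Ψ ^ (N + 1)) / (1 - Ψ))
    (by simp only [zero_add, pow_one]; field_simp)
    (fun N => by
      rw [← hΨ]
      field_simp
      ring)
    (fun N => by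
      have h1 := hΨp N
      have h2 : 0 < Ψ ^ (N + 1) := by positivity
      constructor
      · exact div_nonneg (mul_nonneg hρ0.le (by linarith)) hΨ1.le
      · rw [div_le_one hΨ1]
        nlinarith)
    N 0 1 one_pos
  obtain ⟨ι, hι, s, j, hs, hj, hdis, hsum⟩ := hcore
  have hid : ∀ S : Set (Fin n → ℝ), HC.hom 0 1 '' S = S := by
    intro S
    have : HC.hom (n := n) 0 1 = id := by
      ext x i; simp [HC.hom]
    rw [this, image_id]
  simp only [hid, hap, hGQ] at hsum
  let e := Fintype.equivFin ι
  have hcdis : Pairwise (Function.onFun Disjoint fun a : Fin (Fintype.card ι) =>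
      G '' (HC.cel (s (e.symm a)) (j (e.symm a)) '' K)) := by
    intro a b hab
    exact (Set.disjoint_image_iff G.injective).2 (hdis (e.symm.injective.ne hab))
  refine ⟨Fintype.card ι, fun a => G '' (HC.cel (s (e.symm a)) (j (e.symm a)) '' K), ?_, hcdis, ?_, ?_⟩
  · intro a
    refine ⟨G ((2 ^ s (e.symm a) : ℝ)⁻¹ • fun i => (j (e.symm a) i : ℝ)) -
      (2 ^ s (e.symm a) : ℝ)⁻¹ • G 0, ((2 ^ s (e.symm a) : ℝ)⁻¹), by positivity, ?_, s (e.symm a), hs _, G, hGp, ?_,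
      j (e.symm a), hj _, ?_⟩
    · beta_reduce
      unfold HC.cel
      rw [HC.affine_image, hGK]
    · rw [HC.stdBox_zero, hGQ]
    · rw [HC.stdBox_cel, HC.cel, HC.affine_image, hGQ]
  · refine iUnion_subset fun a => ?_
    rw [← hGQ]
    exact image_mono ((image_mono hKQ).trans (HC.cel_sub _ _ (hj _)))
  · refine hsum.trans (le_of_eq ?_)
    rw [measure_iUnion hcdis, tsum_fintype]
    · exact (Equiv.sum_comp e.symm fun b => μ (G '' (HC.cel (s b) (j b) '' K))).symm
    · intro a
      apply IsOpen.measurableSet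
      have h1 : IsOpen (HC.cel (s (e.symm a)) (j (e.symm a)) '' K) :=
        (HC.homH _ ((2 ^ s (e.symm a) : ℝ)⁻¹) (by positivity)).isOpenMap _ hKo
      exact GH.isOpenMap _ h1
end

section
/- Let 𝔊 be a homothecy invariant collection of open rectangles in ℝⁿ, let μ be a nonzero locally finite nonnegative Borel measure doubling with respect to 𝔊, and let ν be a locally finite nonnegative Borel measure. Suppose there exist γ ∈ (0,1) and c > 0 such that ν({x ∈ ℝⁿ : M_{𝔊,μ}(1_E)(x) > γ}) ≤ c·ν(E) for every Borel set E. Then there exist p₀ > 1 and C > 0 such that for every λ ∈ (0,1) and every Borel set E ⊆ ℝⁿ, ν({x ∈ ℝⁿ : M_{𝔊,μ}(1_E)(x) > λ}) ≤ (C/λ^{p₀})·ν(E); that is, M_{𝔊,μ} is of restricted weak type (p₀, p₀) with respect to ν. -/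
open MeasureTheory Set Filter
open scoped ENNReal Topology Pointwise

/-- Doubling for balls in the sup norm. -/
def XDbl {n : ℕ} (μ : Measure (Fin n → ℝ)) (D : ℝ≥0∞) : Prop :=
  ∀ (p p' : Fin n → ℝ) (s : ℝ), 0 < s → dist p p' ≤ s →
    μ (Metric.ball p' (2 * s)) ≤ D * μ (Metric.ball p s)

/-- Halo of a set with respect to sup norm balls. -/
def hX {n : ℕ} (μ : Measure (Fin n → ℝ)) (g : ℝ≥0∞) (E : Set (Fin n → ℝ)) :
    Set (Fin n → ℝ) :=
  {x | ∃ p s, 0 < s ∧ x ∈ Metric.ball p s ∧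
    g * μ (Metric.ball p s) < μ (E ∩ Metric.ball p s)}

lemma hX_sub {n : ℕ} {μ : Measure (Fin n → ℝ)} {g : ℝ≥0∞} {E : Set (Fin n → ℝ)}
    {p : Fin n → ℝ} {s : ℝ} (hs : 0 < s)
    (h : g * μ (Metric.ball p s) < μ (E ∩ Metric.ball p s)) :
    Metric.ball p s ⊆ hX μ g E := fun _ hx => ⟨p, s, hs, hx, h⟩

lemma hX_isOpen {n : ℕ} (μ : Measure (Fin n → ℝ)) (g : ℝ≥0∞) (E : Set (Fin n → ℝ)) :
    IsOpen (hX μ g E) := by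
  rw [isOpen_iff_mem_nhds]
  rintro x ⟨p, s, hs, hx, h⟩
  exact mem_of_superset (Metric.isOpen_ball.mem_nhds hx) (hX_sub hs h)

lemma hX_mono {n : ℕ} (μ : Measure (Fin n → ℝ)) (g : ℝ≥0∞) : Monotone (hX μ g) := by
  rintro A B hAB x ⟨p, s, hs, hx, h⟩
  exact ⟨p, s, hs, hx, h.trans_le (measure_mono (inter_subset_inter_left _ hAB))⟩

lemma hX_iter_isOpen {n : ℕ} (μ : Measure (Fin n → ℝ)) (g : ℝ≥0∞) (k : ℕ)
    {E : Set (Fin n → ℝ)} (hE : IsOpen E) : IsOpen ((hX μ g)^[k] E) := by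
  cases k with
  | zero => exact hE
  | succ k => rw [Function.iterate_succ_apply']; exact hX_isOpen _ _ _

lemma XDbl.iter {n : ℕ} {μ : Measure (Fin n → ℝ)} {D : ℝ≥0∞} (hD : XDbl μ D)
    (p : Fin n → ℝ) {s : ℝ} (hs : 0 < s) (k : ℕ) :
    μ (Metric.ball p (2 ^ k * s)) ≤ D ^ k * μ (Metric.ball p s) := by
  induction k with
  | zero => simp
  | succ k ih =>
    calc μ (Metric.ball p (2 ^ (k+1) * s)) = μ (Metric.ball p (2 * (2 ^ k * s))) := by
          congr 2; ring
      _ ≤ D * μ (Metric.ball p (2 ^ k * s)) := hD p p _ (by positivity) (by simp; positivity)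
      _ ≤ D * (D ^ k * μ (Metric.ball p s)) := by gcongr
      _ = _ := by ring

lemma XDbl.pos {n : ℕ} {μ : Measure (Fin n → ℝ)} {D : ℝ≥0∞} (hD : XDbl μ D) (h0 : μ ≠ 0)
    (p : Fin n → ℝ) {s : ℝ} (hs : 0 < s) : 0 < μ (Metric.ball p s) := by
  rw [pos_iff_ne_zero]
  intro h
  apply h0
  rw [← Measure.measure_univ_eq_zero]
  have : (univ : Set (Fin n → ℝ)) = ⋃ k : ℕ, Metric.ball p (2 ^ k * s) := by
    symm
    rw [eq_univ_iff_forall]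
    intro x
    obtain ⟨k, hk⟩ := pow_unbounded_of_one_lt (dist x p / s) (one_lt_two)
    refine mem_iUnion.2 ⟨k, ?_⟩
    rw [Metric.mem_ball]
    exact (div_lt_iff₀ hs).1 hk
  rw [this, measure_iUnion_null_iff]
  intro k
  have := hD.iter p hs k
  rw [h, mul_zero] at this
  simpa using this

lemma XDbl.sphere_le {n : ℕ} {μ : Measure (Fin n → ℝ)} {D : ℝ≥0∞} (hD : XDbl μ D)
    (p : Fin n → ℝ) {s ε : ℝ} (hs : 0 < s) (hε : 0 < ε) :
    μ (Metric.sphere p s) ≤ D ^ 4 * μ (Metric.ball p (s + ε) \ Metric.closedBall p s) := by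
  obtain ⟨u, hu, hdisj, hcov⟩ := Vitali.exists_disjoint_subfamily_covering_enlargement_closedBall
    (Metric.sphere p s) (fun x => x) (fun _ => ε) ε (fun _ _ => le_rfl) 5 (by norm_num)
  have hc : u.Countable := hdisj.countable_of_nonempty_interior fun b _ =>
    (Metric.nonempty_ball.2 hε).mono Metric.ball_subset_interior_closedBall
  set q : (Fin n → ℝ) → (Fin n → ℝ) := fun b => b + (ε / 2 / s) • (b - p) with hq
  have hnorm : ∀ b ∈ u, ‖b - p‖ = s := fun b hb => by
    have := hu hb; rwa [mem_sphere_iff_norm] at this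
  have hdq : ∀ b ∈ u, dist (q b) b = ε / 2 := fun b hb => by
    rw [hq, dist_eq_norm]
    simp only [add_sub_cancel_left]
    rw [norm_smul, hnorm b hb, Real.norm_eq_abs, abs_of_pos (by positivity)]
    field_simp
  have hqp : ∀ b ∈ u, dist (q b) p = s + ε / 2 := fun b hb => by
    have : q b - p = (1 + ε / 2 / s) • (b - p) := by
      simp only [hq, add_smul, one_smul]; abel
    rw [dist_eq_norm, this, norm_smul, hnorm b hb, Real.norm_eq_abs, abs_of_pos (by positivity)]
    field_simp
  have h1 : Metric.sphere p s ⊆ ⋃ b ∈ u, Metric.ball b (2 ^ 3 * ε) := by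
    intro x hx
    obtain ⟨b, hb, hsub⟩ := hcov x hx
    refine mem_iUnion₂.2 ⟨b, hb, ?_⟩
    have := hsub (Metric.mem_closedBall_self hε.le)
    rw [Metric.mem_closedBall] at this
    rw [Metric.mem_ball]; linarith
  have h2 : ∀ b ∈ u, μ (Metric.ball b (2 ^ 3 * ε)) ≤ D ^ 4 * μ (Metric.ball (q b) (ε / 2)) := by
    intro b hb
    calc _ ≤ D ^ 3 * μ (Metric.ball b ε) := hD.iter b hε 3
      _ = D ^ 3 * μ (Metric.ball b (2 * (ε / 2))) := by congr 3; ring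
      _ ≤ D ^ 3 * (D * μ (Metric.ball (q b) (ε / 2))) := by
          gcongr; exact hD _ _ _ (by positivity) (hdq b hb).le
      _ = _ := by ring
  have hdisj2 : u.PairwiseDisjoint fun b => Metric.ball (q b) (ε / 2) := by
    intro b hb b' hb' hne
    refine (hdisj hb hb' hne).mono ?_ ?_
    · exact fun y hy => by
        rw [Metric.mem_ball] at hy; rw [Metric.mem_closedBall]
        linarith [dist_triangle y (q b) b, hdq b hb]
    · exact fun y hy => by
        rw [Metric.mem_ball] at hy; rw [Metric.mem_closedBall]
        linarith [dist_triangle y (q b') b', hdq b' hb']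
  calc μ (Metric.sphere p s) ≤ μ (⋃ b ∈ u, Metric.ball b (2 ^ 3 * ε)) := measure_mono h1
    _ ≤ ∑' b : u, μ (Metric.ball (b : Fin n → ℝ) (2 ^ 3 * ε)) := measure_biUnion_le μ hc _
    _ ≤ ∑' b : u, D ^ 4 * μ (Metric.ball (q b) (ε / 2)) :=
        ENNReal.tsum_le_tsum fun b => h2 b b.2
    _ = D ^ 4 * μ (⋃ b ∈ u, Metric.ball (q b) (ε / 2)) := by
        rw [ENNReal.tsum_mul_left, measure_biUnion hc hdisj2 fun _ _ => measurableSet_ball]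
    _ ≤ _ := by
        gcongr
        refine iUnion₂_subset fun b hb y hy => ?_
        rw [Metric.mem_ball] at hy
        rw [Set.mem_sdiff, Metric.mem_ball, Metric.mem_closedBall, not_le]
        constructor
        · linarith [dist_triangle y (q b) p, hqp b hb]
        · linarith [dist_triangle (q b) y p, hqp b hb, dist_comm y (q b)]

lemma XDbl.sphere {n : ℕ} {μ : Measure (Fin n → ℝ)} [IsLocallyFiniteMeasure μ] {D : ℝ≥0∞}
    (hD : XDbl μ D) (hDt : D ≠ ∞) (p : Fin n → ℝ) {s : ℝ} (hs : 0 < s) :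
    μ (Metric.sphere p s) = 0 := by
  set A : ℕ → Set (Fin n → ℝ) := fun m =>
    Metric.ball p (s + 1 / ((m : ℝ) + 1)) \ Metric.closedBall p s with hA
  have hanti : Antitone A := fun m k hmk => by
    refine sdiff_subset_sdiff_left (Metric.ball_subset_ball ?_)
    have : 1 / ((k : ℝ) + 1) ≤ 1 / ((m : ℝ) + 1) := by gcongr
    linarith
  have hI : ⋂ m, A m = ∅ := by
    rw [eq_empty_iff_forall_notMem]
    intro x hx
    rw [mem_iInter] at hx
    have h1 := (hx 0).2
    rw [Metric.mem_closedBall, not_le] at h1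
    obtain ⟨m, hm⟩ := exists_nat_one_div_lt (sub_pos.2 h1)
    have := (hx m).1
    rw [Metric.mem_ball] at this
    linarith
  have ht := tendsto_measure_iInter_atTop (μ := μ) (s := A)
    (fun m => (measurableSet_ball.diff measurableSet_closedBall).nullMeasurableSet) hanti
    ⟨0, ((measure_mono sdiff_subset).trans_lt measure_ball_lt_top).ne⟩
  rw [hI, measure_empty] at ht
  have ht2 := ENNReal.Tendsto.const_mul ht (Or.inr (ENNReal.pow_ne_top hDt (n := 4)))
  rw [mul_zero] at ht2
  exact le_antisymm (ge_of_tendsto' ht2 fun m => hD.sphere_le p hs (by positivity)) zero_le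

lemma XDbl.cont {n : ℕ} {μ : Measure (Fin n → ℝ)} [IsLocallyFiniteMeasure μ] {D : ℝ≥0∞}
    (hD : XDbl μ D) (hDt : D ≠ ∞) (P : ℝ → Fin n → ℝ) (S : ℝ → ℝ) (hP : Continuous P)
    (hS : Continuous S) (t : ℝ) (ht : 0 < S t) :
    ContinuousAt (fun t => μ (Metric.ball (P t) (S t))) t := by
  refine tendsto_measure_of_ae_tendsto_indicator (𝓝 t) measurableSet_ball
    (fun _ => measurableSet_ball) (B := Metric.ball (P t) (S t + 2)) measurableSet_ball
    measure_ball_lt_top.ne ?_ ?_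
  · have h1 : ∀ᶠ i in 𝓝 t, dist (P i) (P t) < 1 :=
      (hP.tendsto t).eventually (Metric.ball_mem_nhds _ one_pos)
    have h2 : ∀ᶠ i in 𝓝 t, dist (S i) (S t) < 1 :=
      (hS.tendsto t).eventually (Metric.ball_mem_nhds _ one_pos)
    filter_upwards [h1, h2] with i h1 h2 y hy
    rw [Metric.mem_ball] at *
    rw [Real.dist_eq, abs_lt] at h2
    linarith [dist_triangle y (P i) (P t)]
  · have hn : ∀ᵐ x ∂μ, x ∉ Metric.sphere (P t) (S t) :=
      measure_eq_zero_iff_ae_notMem.1 (hD.sphere hDt (P t) ht)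
    filter_upwards [hn] with x hx
    rw [Metric.mem_sphere] at hx
    have hc : Continuous fun i => dist x (P i) := by fun_prop
    rcases lt_or_gt_of_ne hx with h | h
    · filter_upwards [(hc.tendsto t).eventually_lt (hS.tendsto t) h] with i hi
      simp [Metric.mem_ball, hi, h]
    · filter_upwards [(hS.tendsto t).eventually_lt (hc.tendsto t) h] with i hi
      simp only [Metric.mem_ball, not_lt.2 hi.le, not_lt.2 h.le]

lemma XDbl.grow {n : ℕ} {μ : Measure (Fin n → ℝ)} [IsLocallyFiniteMeasure μ] {D : ℝ≥0∞}
    (hD : XDbl μ D) (hDt : D ≠ ∞) (h0 : μ ≠ 0) {g r : ℝ≥0∞} (hgr : g < r) (hr1 : r < 1)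
    {p p' : Fin n → ℝ} {s : ℝ} (hs : 0 < s) (hpp : dist p p' ≤ s) {E : Set (Fin n → ℝ)}
    (hE : Metric.ball p s ⊆ E) (N : ℕ) :
    ∀ t ∈ Icc (0 : ℝ) 1,
      r ^ (N + 1) * μ (Metric.ball (p + t • (p' - p)) (s * (1 + t))) ≤ μ (Metric.ball p s) →
      Metric.ball (p + t • (p' - p)) (s * (1 + t)) ⊆ (hX μ g)^[N + 1] E := by
  have hr0 : r ≠ 0 := (zero_le.trans_lt hgr).ne'
  have hrt : r ≠ ∞ := hr1.ne_top
  have hnest : ∀ t t', 0 ≤ t → t ≤ t' →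
      Metric.ball (p + t • (p' - p)) (s * (1 + t)) ⊆
        Metric.ball (p + t' • (p' - p)) (s * (1 + t')) := by
    intro t t' ht htt
    refine Metric.ball_subset_ball' ?_
    have : dist (p + t • (p' - p)) (p + t' • (p' - p)) ≤ (t' - t) * s := by
      rw [dist_add_left, dist_eq_norm, ← sub_smul, norm_smul, Real.norm_eq_abs, abs_sub_comm,
        abs_of_nonneg (sub_nonneg.2 htt)]
      gcongr
      · rw [← dist_eq_norm, dist_comm]; exact hpp
    nlinarith
  have h00 : Metric.ball (p + (0:ℝ) • (p' - p)) (s * (1 + 0)) = Metric.ball p s := by simp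
  have hstep : ∀ A : Set (Fin n → ℝ), ∀ t ≥ (0:ℝ), ∀ t' ≥ t,
      Metric.ball (p + t • (p' - p)) (s * (1 + t)) ⊆ A →
      r * μ (Metric.ball (p + t' • (p' - p)) (s * (1 + t'))) ≤
        μ (Metric.ball (p + t • (p' - p)) (s * (1 + t))) →
      Metric.ball (p + t' • (p' - p)) (s * (1 + t')) ⊆ hX μ g A := by
    intro A t ht t' ht' hA hle
    have hs' : 0 < s * (1 + t') := mul_pos hs (by linarith)
    refine hX_sub hs' ?_
    calc _ < r * μ (Metric.ball (p + t' • (p' - p)) (s * (1 + t'))) :=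
          (ENNReal.mul_lt_mul_iff_left (hD.pos h0 _ hs').ne' measure_ball_lt_top.ne).2 hgr
      _ ≤ _ := hle
      _ ≤ _ := measure_mono (subset_inter hA (hnest t t' ht ht'))
  induction N with
  | zero =>
    intro t ht hle
    rw [zero_add, Function.iterate_one]
    rw [zero_add, pow_one] at hle
    refine hstep E 0 le_rfl t ht.1 (by rwa [h00]) (by rwa [h00])
  | succ N ih =>
    intro t ht hle
    rw [Function.iterate_succ_apply']
    by_cases hc : r ^ (N + 1) * μ (Metric.ball (p + t • (p' - p)) (s * (1 + t))) ≤
        μ (Metric.ball p s)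
    · refine hstep _ t ht.1 t le_rfl (ih t ht hc) ?_
      exact mul_le_of_le_one_left zero_le hr1.le
    · have hcont : ContinuousOn
          (fun t => r ^ (N + 1) * μ (Metric.ball (p + t • (p' - p)) (s * (1 + t)))) (Icc 0 t) := by
        intro u hu
        refine (ENNReal.Tendsto.const_mul (hD.cont hDt (fun t => p + t • (p' - p))
          (fun t => s * (1 + t)) (by fun_prop) (by fun_prop) u
          (mul_pos hs (by linarith [hu.1]))) (Or.inr (ENNReal.pow_ne_top hrt))).mono_left
            nhdsWithin_le_nhds
      have hmem : μ (Metric.ball p s) ∈ Icc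
          (r ^ (N + 1) * μ (Metric.ball (p + (0:ℝ) • (p' - p)) (s * (1 + 0))))
          (r ^ (N + 1) * μ (Metric.ball (p + t • (p' - p)) (s * (1 + t)))) := by
        refine ⟨?_, (not_le.1 hc).le⟩
        rw [h00]
        exact mul_le_of_le_one_left zero_le (pow_le_one₀ zero_le hr1.le)
      obtain ⟨u, hu, hu2⟩ := intermediate_value_Icc ht.1 hcont hmem
      refine hstep _ u hu.1 t hu.2 (ih u ⟨hu.1, hu.2.trans ht.2⟩ hu2.le) ?_
      have : r ^ (N + 1) * (r * μ (Metric.ball (p + t • (p' - p)) (s * (1 + t)))) ≤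
          r ^ (N + 1) * μ (Metric.ball (p + u • (p' - p)) (s * (1 + u))) := by
        simp only at hu2
        rw [hu2, ← mul_assoc, ← pow_succ]; exact hle
      exact (ENNReal.mul_le_mul_iff_right (pow_ne_zero _ hr0) (ENNReal.pow_ne_top hrt)).1 this

lemma XDbl.grow' {n : ℕ} {μ : Measure (Fin n → ℝ)} [IsLocallyFiniteMeasure μ] {D : ℝ≥0∞}
    (hD : XDbl μ D) (hDt : D ≠ ∞) (h0 : μ ≠ 0) {g r : ℝ≥0∞} (hgr : g < r) (hr1 : r < 1)
    {N : ℕ} (hN : r ^ (N + 1) * D ≤ 1)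
    {p p' : Fin n → ℝ} {s : ℝ} (hs : 0 < s) (hpp : dist p p' ≤ s) {E : Set (Fin n → ℝ)}
    (hE : g * μ (Metric.ball p s) < μ (E ∩ Metric.ball p s)) :
    Metric.ball p' (2 * s) ⊆ (hX μ g)^[N + 2] E := by
  have := hD.grow hDt h0 hgr hr1 hs hpp (hX_sub hs hE) N 1 ⟨zero_le_one, le_rfl⟩
  have e : Metric.ball (p + (1:ℝ) • (p' - p)) (s * (1 + 1)) = Metric.ball p' (2 * s) := by
    congr 1
    · simp
    · ring
  rw [e] at this
  rw [Function.iterate_succ_apply]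
  refine this ?_
  calc _ ≤ r ^ (N + 1) * (D * μ (Metric.ball p s)) := by gcongr; exact hD _ _ _ hs hpp
    _ = (r ^ (N + 1) * D) * μ (Metric.ball p s) := by ring
    _ ≤ _ := mul_le_of_le_one_left zero_le hN

/-- Centers of the `2^n` dyadic children of the ball of center `p` and radius `2 * h`. -/
def chC {n : ℕ} (p : Fin n → ℝ) (h : ℝ) (e : Fin n → Bool) : Fin n → ℝ :=
  fun i => p i + if e i then h else -h

lemma chC_dist {n : ℕ} (p : Fin n → ℝ) {h : ℝ} (hh : 0 < h) (e : Fin n → Bool) :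
    dist (chC p h e) p ≤ h := by
  rw [dist_pi_le_iff hh.le]
  intro i
  rw [Real.dist_eq]
  simp only [chC]
  split_ifs <;> simp [abs_of_pos hh]

lemma chC_sub {n : ℕ} (p : Fin n → ℝ) {h : ℝ} (hh : 0 < h) (e : Fin n → Bool) :
    Metric.ball (chC p h e) h ⊆ Metric.ball p (2 * h) :=
  Metric.ball_subset_ball' (by linarith [chC_dist p hh e])

lemma chC_disj {n : ℕ} (p : Fin n → ℝ) {h : ℝ} (hh : 0 < h) :
    Pairwise (Function.onFun Disjoint fun e => Metric.ball (chC p h e) h) := by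
  intro e e' hne
  rw [Function.onFun, Set.disjoint_left]
  intro x hx hx'
  apply hne
  ext i
  rw [Metric.mem_ball, dist_pi_lt_iff hh] at hx hx'
  have h1 := hx i
  have h2 := hx' i
  rw [Real.dist_eq, abs_lt] at h1 h2
  simp only [chC] at h1 h2
  cases hi : e i <;> cases hi' : e' i <;> simp [hi, hi'] at h1 h2 ⊢ <;> linarith

lemma chC_cover {n : ℕ} (p : Fin n → ℝ) {h : ℝ} (hh : 0 < h) :
    Metric.ball p (2 * h) ⊆ ⋃ e, Metric.closedBall (chC p h e) h := by
  intro x hx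
  rw [Metric.mem_ball, dist_pi_lt_iff (by positivity)] at hx
  refine mem_iUnion.2 ⟨fun i => decide (p i ≤ x i), ?_⟩
  rw [Metric.mem_closedBall, dist_pi_le_iff hh.le]
  intro i
  have h1 := hx i
  rw [Real.dist_eq, abs_lt] at h1
  rw [Real.dist_eq, abs_le]
  simp only [chC, decide_eq_true_eq]
  split_ifs with hc
  · constructor <;> linarith
  · rw [not_le] at hc
    constructor <;> linarith

lemma XDbl.cover {n : ℕ} {μ : Measure (Fin n → ℝ)} [IsLocallyFiniteMeasure μ] {D : ℝ≥0∞}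
    (hD : XDbl μ D) (hDt : D ≠ ∞) (p : Fin n → ℝ) {h : ℝ} (hh : 0 < h) (A : Set (Fin n → ℝ)) :
    μ (A ∩ Metric.ball p (2 * h)) ≤ ∑ e, μ (A ∩ Metric.ball (chC p h e) h) := by
  calc μ (A ∩ Metric.ball p (2 * h)) ≤ μ (⋃ e, A ∩ Metric.closedBall (chC p h e) h) := by
        refine measure_mono ?_
        rw [← inter_iUnion]
        exact inter_subset_inter_right _ (chC_cover p hh)
    _ ≤ ∑ e, μ (A ∩ Metric.closedBall (chC p h e) h) := measure_iUnion_fintype_le _ _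
    _ ≤ ∑ e, μ (A ∩ Metric.ball (chC p h e) h) := by
        refine Finset.sum_le_sum fun e _ => ?_
        calc _ ≤ μ ((A ∩ Metric.ball (chC p h e) h) ∪ Metric.sphere (chC p h e) h) := by
              refine measure_mono ?_
              rw [← Metric.ball_union_sphere]
              rintro x ⟨hx, hx' | hx'⟩
              · exact Or.inl ⟨hx, hx'⟩
              · exact Or.inr hx'
          _ ≤ _ := measure_union_le _ _
          _ = _ := by rw [hD.sphere hDt _ hh, add_zero]

lemma sum_ch_le {n : ℕ} {μ : Measure (Fin n → ℝ)} 
    (p : Fin n → ℝ) {h : ℝ} (hh : 0 < h) {A : Set (Fin n → ℝ)} (hA : MeasurableSet A) :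
    ∑ e, μ (A ∩ Metric.ball (chC p h e) h) ≤ μ (A ∩ Metric.ball p (2 * h)) := by
  rw [← tsum_fintype (L := SummationFilter.unconditional _), ← measure_iUnion]
  · exact measure_mono (iUnion_subset fun e => inter_subset_inter_right _ (chC_sub p hh e))
  · intro e e' hne
    exact (chC_disj p hh hne).mono inter_subset_right inter_subset_right
  · exact fun e => hA.inter measurableSet_ball

lemma XDbl.gain_aux {n : ℕ} {μ : Measure (Fin n → ℝ)} [IsLocallyFiniteMeasure μ] {D : ℝ≥0∞}
    (hD : XDbl μ D) (hDt : D ≠ ∞) (h0 : μ ≠ 0) {g r : ℝ≥0∞} (hgr : g < r) (hr1 : r < 1)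
    {N : ℕ} (hN : r ^ (N + 1) * D ≤ 1) {E : Set (Fin n → ℝ)} (hE : IsOpen E) {δ : ℝ} (k : ℕ) :
    ∀ (p : Fin n → ℝ) (s : ℝ), 0 < s → 2 * s ≤ 2 ^ k * δ →
      μ (E ∩ Metric.ball p s) ≤ g * μ (Metric.ball p s) →
      μ (E ∩ Metric.ball p s) ≤ g * μ ((hX μ g)^[N + 2] E ∩ Metric.ball p s)
        + μ ({x ∈ E | Metric.infDist x Eᶜ ≤ δ} ∩ Metric.ball p s) := by
  have hmB : MeasurableSet {x ∈ E | Metric.infDist x Eᶜ ≤ δ} :=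
    hE.measurableSet.inter
      (measurableSet_le (Metric.continuous_infDist_pt _).measurable measurable_const)
  induction k with
  | zero =>
    intro p s hs hsd hle
    refine le_add_left (measure_mono ?_)
    rintro x ⟨hx, hxp⟩
    refine ⟨⟨hx, ?_⟩, hxp⟩
    have : ¬ Metric.ball p s ⊆ E := by
      intro hsub
      rw [inter_eq_self_of_subset_right hsub] at hle
      have hp := hD.pos h0 p hs
      have : g * μ (Metric.ball p s) < 1 * μ (Metric.ball p s) :=
        (ENNReal.mul_lt_mul_iff_left hp.ne' measure_ball_lt_top.ne).2 (hgr.trans hr1)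
      rw [one_mul] at this
      exact absurd hle (not_le.2 this)
    obtain ⟨y, hy, hyE⟩ := not_subset.1 this
    refine (Metric.infDist_le_dist_of_mem (show y ∈ Eᶜ from hyE)).trans ?_
    rw [Metric.mem_ball] at hy hxp
    rw [pow_zero, one_mul] at hsd
    linarith [dist_triangle_right x y p]
  | succ k ih =>
    intro p s hs hsd hle
    obtain ⟨h, rfl⟩ : ∃ h, s = 2 * h := ⟨s / 2, by ring⟩
    have hh : 0 < h := by linarith
    by_cases hP : ∃ e, g * μ (Metric.ball (chC p h e) h) < μ (E ∩ Metric.ball (chC p h e) h)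
    · obtain ⟨e, he⟩ := hP
      have := hD.grow' hDt h0 hgr hr1 hN hh (chC_dist p hh e) he
      rw [inter_eq_self_of_subset_right this]
      exact le_add_right hle
    · push Not at hP
      calc _ ≤ ∑ e, μ (E ∩ Metric.ball (chC p h e) h) := hD.cover hDt p hh E
        _ ≤ ∑ e, (g * μ ((hX μ g)^[N + 2] E ∩ Metric.ball (chC p h e) h)
            + μ ({x ∈ E | Metric.infDist x Eᶜ ≤ δ} ∩ Metric.ball (chC p h e) h)) := by
            refine Finset.sum_le_sum fun e _ => ih _ _ hh ?_ (hP e)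
            rw [pow_succ] at hsd; linarith
        _ ≤ _ := by
            rw [Finset.sum_add_distrib, ← Finset.mul_sum]
            gcongr
            · exact sum_ch_le p hh (hX_iter_isOpen _ _ _ hE).measurableSet
            · exact sum_ch_le p hh hmB

lemma XDbl.gain {n : ℕ} {μ : Measure (Fin n → ℝ)} [IsLocallyFiniteMeasure μ] {D : ℝ≥0∞}
    (hD : XDbl μ D) (hDt : D ≠ ∞) (h0 : μ ≠ 0) {g r : ℝ≥0∞} (hgr : g < r) (hr1 : r < 1)
    {N : ℕ} (hN : r ^ (N + 1) * D ≤ 1) {E : Set (Fin n → ℝ)} (hE : IsOpen E)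
    (p : Fin n → ℝ) {s : ℝ} (hs : 0 < s)
    (hle : μ (E ∩ Metric.ball p s) ≤ g * μ (Metric.ball p s)) :
    μ (E ∩ Metric.ball p s) ≤ g * μ ((hX μ g)^[N + 2] E ∩ Metric.ball p s) := by
  have hne : (Eᶜ).Nonempty := by
    rw [nonempty_iff_ne_empty]
    intro he
    rw [compl_empty_iff] at he
    rw [he, univ_inter] at hle
    have : g * μ (Metric.ball p s) < 1 * μ (Metric.ball p s) :=
      (ENNReal.mul_lt_mul_iff_left (hD.pos h0 p hs).ne' measure_ball_lt_top.ne).2 (hgr.trans hr1)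
    rw [one_mul] at this
    exact absurd hle (not_le.2 this)
  set A : ℕ → Set (Fin n → ℝ) := fun m =>
    {x ∈ E | Metric.infDist x Eᶜ ≤ 1 / ((m : ℝ) + 1)} ∩ Metric.ball p s with hA
  have hmB : ∀ δ : ℝ, MeasurableSet {x ∈ E | Metric.infDist x Eᶜ ≤ δ} := fun δ =>
    hE.measurableSet.inter
      (measurableSet_le (Metric.continuous_infDist_pt _).measurable measurable_const)
  have hanti : Antitone A := fun m k hmk => by
    rintro x ⟨⟨hx, hx2⟩, hx3⟩
    have : 1 / ((k : ℝ) + 1) ≤ 1 / ((m : ℝ) + 1) := by gcongr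
    exact ⟨⟨hx, hx2.trans this⟩, hx3⟩
  have hI : ⋂ m, A m = ∅ := by
    rw [eq_empty_iff_forall_notMem]
    intro x hx
    rw [mem_iInter] at hx
    have hxE := (hx 0).1.1
    have h1 : 0 < Metric.infDist x Eᶜ :=
      (hE.isClosed_compl.notMem_iff_infDist_pos hne).1 (by simpa using hxE)
    obtain ⟨m, hm⟩ := exists_nat_one_div_lt h1
    exact absurd (hx m).1.2 (not_le.2 hm)
  have ht := tendsto_measure_iInter_atTop (μ := μ) (s := A)
    (fun m => ((hmB _).inter measurableSet_ball).nullMeasurableSet) hanti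
    ⟨0, ((measure_mono inter_subset_right).trans_lt measure_ball_lt_top).ne⟩
  rw [hI, measure_empty] at ht
  have ht2 := ht.const_add (g * μ ((hX μ g)^[N + 2] E ∩ Metric.ball p s))
  rw [add_zero] at ht2
  refine ge_of_tendsto' ht2 fun m => ?_
  obtain ⟨k, hk⟩ := pow_unbounded_of_one_lt (2 * s / (1 / ((m : ℝ) + 1))) (one_lt_two)
  exact hD.gain_aux hDt h0 hgr hr1 hN hE k p s hs
    ((div_lt_iff₀ (by positivity)).1 hk).le hle

lemma XDbl.sub_hX {n : ℕ} {μ : Measure (Fin n → ℝ)} [IsLocallyFiniteMeasure μ] {D : ℝ≥0∞}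
    (hD : XDbl μ D) (h0 : μ ≠ 0) {g : ℝ≥0∞} (hg1 : g < 1)
    {E : Set (Fin n → ℝ)} (hE : IsOpen E) : E ⊆ hX μ g E := by
  intro x hx
  obtain ⟨s, hs, hsub⟩ := Metric.isOpen_iff.1 hE x hx
  refine ⟨x, s, hs, Metric.mem_ball_self hs, ?_⟩
  rw [inter_eq_self_of_subset_right hsub]
  have : g * μ (Metric.ball x s) < 1 * μ (Metric.ball x s) :=
    (ENNReal.mul_lt_mul_iff_left (hD.pos h0 x hs).ne' measure_ball_lt_top.ne).2 hg1
  rwa [one_mul] at this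

lemma XDbl.sub_iter {n : ℕ} {μ : Measure (Fin n → ℝ)} [IsLocallyFiniteMeasure μ] {D : ℝ≥0∞}
    (hD : XDbl μ D) (h0 : μ ≠ 0) {g : ℝ≥0∞} (hg1 : g < 1)
    {E : Set (Fin n → ℝ)} (hE : IsOpen E) (k : ℕ) : E ⊆ (hX μ g)^[k] E := by
  induction k with
  | zero => exact subset_rfl
  | succ k ih =>
    rw [Function.iterate_succ_apply']
    exact ih.trans (hD.sub_hX h0 hg1 (hX_iter_isOpen _ _ _ hE))

lemma XDbl.main {n : ℕ} {μ : Measure (Fin n → ℝ)} [IsLocallyFiniteMeasure μ] {D : ℝ≥0∞}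
    (hD : XDbl μ D) (hDt : D ≠ ∞) (h0 : μ ≠ 0) {g r : ℝ≥0∞} (hg0 : g ≠ 0)
    (hgr : g < r) (hr1 : r < 1)
    {N : ℕ} (hN : r ^ (N + 1) * D ≤ 1) (p : Fin n → ℝ) {s : ℝ} (hs : 0 < s) (k : ℕ) :
    ∀ E : Set (Fin n → ℝ), IsOpen E →
    g ^ (k + 1) * μ (Metric.ball p s) < μ (E ∩ Metric.ball p s) →
    Metric.ball p s ⊆ (hX μ g)^[(N + 2) * k + 1] E := by
  induction k with
  | zero =>
    intro E hE hlt
    simpa using hX_sub hs (by simpa using hlt)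
  | succ k ih =>
    intro E hE hlt
    by_cases hc : μ (E ∩ Metric.ball p s) ≤ g * μ (Metric.ball p s)
    · have hgain := hD.gain hDt h0 hgr hr1 hN hE p hs hc
      have := ih _ (hX_iter_isOpen μ g (N + 2) hE) ?_
      · rw [← Function.iterate_add_apply] at this
        convert this using 2
        ring
      · have h3 := hlt.trans_le hgain
        rw [pow_succ' g (k + 1), mul_assoc] at h3
        exact (ENNReal.mul_lt_mul_iff_right hg0 (hgr.trans hr1).ne_top).1 h3
    · rw [not_le] at hc
      have h1 := hX_sub hs hc
      rw [Function.iterate_succ_apply]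
      exact h1.trans (hD.sub_iter h0 (hgr.trans hr1) (hX_isOpen _ _ _) _)

lemma rect_param {n : ℕ} {R : Set (EuclideanSpace ℝ (Fin n))} (hR : IsRect R) :
    ∃ (L : (Fin n → ℝ) ≃L[ℝ] EuclideanSpace ℝ (Fin n)) (p : Fin n → ℝ),
      R = L '' Metric.ball p 1 := by
  obtain ⟨f, S, ⟨a, b, hab, rfl⟩, rfl⟩ := hR
  set l : Fin n → ℝ := fun i => (b i - a i) / 2 with hl
  have hl0 : ∀ i, 0 < l i := fun i => by simp only [hl]; linarith [hab i]
  set L1 : (Fin n → ℝ) ≃ₗ[ℝ] (Fin n → ℝ) :=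
    LinearEquiv.piCongrRight fun i => LinearEquiv.smulOfNeZero ℝ ℝ (l i) (hl0 i).ne' with hL1
  have hL1a : ∀ q i, L1 q i = l i * q i := fun q i => by simp [hL1]
  set L : (Fin n → ℝ) ≃L[ℝ] EuclideanSpace ℝ (Fin n) :=
    ((L1.trans (WithLp.linearEquiv 2 ℝ (Fin n → ℝ)).symm).trans
      f.toRealLinearIsometryEquiv.toLinearEquiv).toContinuousLinearEquiv with hL
  have hLa : ∀ q, L q = f (WithLp.toLp 2 (L1 q)) - f 0 := fun q => by
    simp [hL]
  set m : Fin n → ℝ := fun i => (a i + b i) / 2 / l i with hm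
  have hball : ∀ q, q ∈ Metric.ball m 1 ↔ ∀ i, (L1 q) i ∈ Ioo (a i) (b i) := by
    intro q
    rw [Metric.mem_ball, dist_pi_lt_iff one_pos]
    refine forall_congr' fun i => ?_
    rw [hL1a, Real.dist_eq, abs_lt, mem_Ioo]
    have e : (a i + b i) / 2 = l i * m i := by
      simp only [hm]; field_simp [(hl0 i).ne']
    have ea : a i = l i * m i - l i := by rw [← e]; simp only [hl]; ring
    have eb : b i = l i * m i + l i := by rw [← e]; simp only [hl]; ring
    rw [ea, eb]
    have := hl0 i
    constructor
    · rintro ⟨h1, h2⟩; constructor <;> nlinarith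
    · rintro ⟨h1, h2⟩; constructor <;> nlinarith
  refine ⟨L, m + L.symm (f 0), ?_⟩
  ext x
  constructor
  · rintro ⟨y, hy, rfl⟩
    refine ⟨L1.symm y.ofLp + L.symm (f 0), ?_, ?_⟩
    · rw [Metric.mem_ball, dist_add_right, ← Metric.mem_ball, hball]
      simpa using hy
    · rw [map_add, hLa]; simp
  · rintro ⟨q, hq, rfl⟩
    obtain ⟨q', rfl⟩ : ∃ q', q = q' + L.symm (f 0) := ⟨q - L.symm (f 0), by simp⟩
    rw [Metric.mem_ball, dist_add_right, ← Metric.mem_ball, hball] at hq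
    refine ⟨WithLp.toLp 2 (L1 q'), hq, ?_⟩
    rw [map_add, hLa]; simp

lemma image_ball {n : ℕ} (L : (Fin n → ℝ) ≃L[ℝ] EuclideanSpace ℝ (Fin n))
    (p p' : Fin n → ℝ) {s t : ℝ} (hs : 0 < s) :
    L '' Metric.ball p' (s * t) = (L (p' - s • p)) +ᵥ s • (L '' Metric.ball p t) := by
  rw [← image_smul_set, ← Set.image_vadd, Set.image_image, _root_.smul_ball hs.ne',
    Real.norm_of_nonneg hs.le]
  ext x
  constructor
  · rintro ⟨q, hq, rfl⟩
    refine ⟨q - (p' - s • p), ?_, ?_⟩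
    · rw [Metric.mem_ball, dist_eq_norm] at *
      convert hq using 2
      abel
    · simp
  · rintro ⟨q, hq, rfl⟩
    refine ⟨q + (p' - s • p), ?_, ?_⟩
    · rw [Metric.mem_ball, dist_eq_norm] at *
      convert hq using 2
      abel
    · simp [add_comm]

lemma mem_halo {n : ℕ} {μ : Measure (EuclideanSpace ℝ (Fin n))}
    {𝔊 : Set (Set (EuclideanSpace ℝ (Fin n)))} {E : Set (EuclideanSpace ℝ (Fin n))}
    (hE : MeasurableSet E) (a : ℝ≥0∞) (x : EuclideanSpace ℝ (Fin n)) :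
    a < maxOp μ 𝔊 (E.indicator 1) x ↔
      ∃ B ∈ 𝔊, x ∈ B ∧ 0 < μ B ∧ a < μ (E ∩ B) / μ B := by
  have hi : ∀ B, ∫⁻ y in B, ENNReal.ofReal |E.indicator (1 : EuclideanSpace ℝ (Fin n) → ℝ) y| ∂μ
      = μ (E ∩ B) := by
    intro B
    have : (fun y => ENNReal.ofReal |E.indicator (1 : EuclideanSpace ℝ (Fin n) → ℝ) y|)
        = E.indicator 1 := by
      ext y
      by_cases hy : y ∈ E <;> simp [hy]
    rw [this, lintegral_indicator_one hE, Measure.restrict_apply hE]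
  simp only [maxOp, lt_iSup_iff, hi, exists_prop]

/-- The setting around one rectangle. -/
lemma rect_setup {n : ℕ} {𝔊 : Set (Set (EuclideanSpace ℝ (Fin n)))}
    (hG : ∀ R ∈ 𝔊, IsRect R) (hhom : HomothecyInvariant 𝔊)
    {μ : Measure (EuclideanSpace ℝ (Fin n))} [IsLocallyFiniteMeasure μ] (hμ : μ ≠ 0)
    {Δ : ℝ} (hdbl : DoublingWrt μ 𝔊 Δ) {R : Set (EuclideanSpace ℝ (Fin n))} (hR : R ∈ 𝔊) :
    ∃ (L : (Fin n → ℝ) ≃L[ℝ] EuclideanSpace ℝ (Fin n)) (p : Fin n → ℝ)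
      (μ' : Measure (Fin n → ℝ)),
      R = L '' Metric.ball p 1 ∧ (∀ A, μ' A = μ (L '' A)) ∧
      (∀ q s, 0 < s → L '' Metric.ball q s ∈ 𝔊) ∧ IsLocallyFiniteMeasure μ' ∧ μ' ≠ 0 ∧
      XDbl μ' (ENNReal.ofReal Δ) := by
  obtain ⟨L, p, hL⟩ := rect_param (hG R hR)
  have hmem : ∀ q s, 0 < s → L '' Metric.ball q s ∈ 𝔊 := by
    intro q s hs
    have := image_ball L p q (t := 1) hs
    rw [mul_one, ← hL] at this
    rw [this]
    exact (hhom _ ((hhom R hR).2 s hs)).1 _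
  have hA : ∀ A, (μ.map L.toHomeomorph.symm) A = μ (L '' A) := by
    intro A
    refine (L.toHomeomorph.symm.toMeasurableEquiv.map_apply A).trans ?_
    congr 1
    exact (L.toEquiv.image_eq_preimage_symm A).symm
  refine ⟨L, p, μ.map L.toHomeomorph.symm, hL, hA, hmem, ?_, ?_, ?_⟩
  · refine ⟨fun x => ⟨Metric.ball x 1, Metric.ball_mem_nhds x one_pos, ?_⟩⟩
    rw [hA]
    refine (measure_mono (image_mono Metric.ball_subset_closedBall)).trans_lt ?_
    exact ((isCompact_closedBall x 1).image L.continuous).measure_lt_top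
  · intro h
    apply hμ
    rw [← Measure.measure_univ_eq_zero]
    have := hA univ
    rw [h, image_univ, L.surjective.range_eq] at this
    simpa using this.symm
  · intro q q' s hs hd
    rw [hA, hA]
    have e := image_ball L q q' (s := 2) (t := s) two_pos
    have := hdbl _ (hmem q s hs) (L (q' - (2:ℝ) • q))
    rw [← e] at this
    exact this (image_mono (Metric.ball_subset_ball' (by linarith)))

lemma halo_isOpen {n : ℕ} {𝔊 : Set (Set (EuclideanSpace ℝ (Fin n)))}
    (hG : ∀ R ∈ 𝔊, IsRect R) {μ : Measure (EuclideanSpace ℝ (Fin n))}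
    {E : Set (EuclideanSpace ℝ (Fin n))} (hE : MeasurableSet E) (a : ℝ≥0∞) :
    IsOpen {x | a < maxOp μ 𝔊 (E.indicator 1) x} := by
  rw [isOpen_iff_mem_nhds]
  intro x hx
  obtain ⟨B, hB, hxB, h0, h⟩ := (mem_halo hE a x).1 hx
  obtain ⟨L, p, hL⟩ := rect_param (hG B hB)
  have hBo : IsOpen B := by
    rw [hL]; exact L.toHomeomorph.isOpenMap _ Metric.isOpen_ball
  exact mem_of_superset (hBo.mem_nhds hxB) fun y hy => (mem_halo hE a y).2 ⟨B, hB, hy, h0, h⟩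

/-- The halo operator. -/
def halo {n : ℕ} (μ : Measure (EuclideanSpace ℝ (Fin n)))
    (𝔊 : Set (Set (EuclideanSpace ℝ (Fin n)))) (g : ℝ≥0∞)
    (E : Set (EuclideanSpace ℝ (Fin n))) : Set (EuclideanSpace ℝ (Fin n)) :=
  {x | g < maxOp μ 𝔊 (E.indicator 1) x}

lemma halo_iter_isOpen {n : ℕ} {𝔊 : Set (Set (EuclideanSpace ℝ (Fin n)))}
    (hG : ∀ R ∈ 𝔊, IsRect R) {μ : Measure (EuclideanSpace ℝ (Fin n))}
    {E : Set (EuclideanSpace ℝ (Fin n))} (hE : IsOpen E) (g : ℝ≥0∞) (k : ℕ) :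
    IsOpen ((halo μ 𝔊 g)^[k] E) := by
  induction k with
  | zero => exact hE
  | succ k ih =>
    rw [Function.iterate_succ_apply']
    exact halo_isOpen hG ih.measurableSet g

lemma halo_level {n : ℕ} {𝔊 : Set (Set (EuclideanSpace ℝ (Fin n)))}
    (hG : ∀ R ∈ 𝔊, IsRect R) (hhom : HomothecyInvariant 𝔊)
    {μ : Measure (EuclideanSpace ℝ (Fin n))} [IsLocallyFiniteMeasure μ] (hμ : μ ≠ 0)
    {Δ : ℝ} (hdbl : DoublingWrt μ 𝔊 Δ) {g r : ℝ≥0∞} (hg0 : g ≠ 0)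
    (hgr : g < r) (hr1 : r < 1) {N : ℕ} (hN : r ^ (N + 1) * ENNReal.ofReal Δ ≤ 1) (k : ℕ)
    {lam : ℝ≥0∞} (hk : g ^ (k + 1) ≤ lam)
    {E : Set (EuclideanSpace ℝ (Fin n))} (hE : IsOpen E) :
    {x | lam < maxOp μ 𝔊 (E.indicator 1) x} ⊆ (halo μ 𝔊 g)^[(N + 2) * k + 1] E := by
  intro x hx
  obtain ⟨R, hR, hxR, h0, h⟩ := (mem_halo hE.measurableSet lam x).1 hx
  obtain ⟨L, p, μ', hL, hA, hmem, hloc, hμ', hD⟩ := rect_setup hG hhom hμ hdbl hR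
  have hinter : ∀ A B : Set _, μ' (L ⁻¹' A ∩ B) = μ (A ∩ L '' B) := fun A B => by
    rw [hA, Set.image_preimage_inter]
  have hlt : g ^ (k + 1) * μ' (Metric.ball p 1) < μ' (L ⁻¹' E ∩ Metric.ball p 1) := by
    have hfin : μ R ≠ ∞ := by rw [hL, ← hA]; exact measure_ball_lt_top.ne
    rw [hinter, hA, ← hL]
    exact (ENNReal.lt_div_iff_mul_lt (Or.inl h0.ne') (Or.inl hfin)).1 (hk.trans_lt h)
  have hsub := hD.main ENNReal.ofReal_ne_top hμ' hg0 hgr hr1 hN p one_pos k (L ⁻¹' E)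
    (hE.preimage L.continuous) hlt
  have hrel : ∀ j, (hX μ' g)^[j] (L ⁻¹' E) ⊆ L ⁻¹' ((halo μ 𝔊 g)^[j] E) := by
    intro j
    induction j with
    | zero => exact subset_rfl
    | succ j ih =>
      rw [Function.iterate_succ_apply', Function.iterate_succ_apply']
      refine (hX_mono μ' g ih).trans ?_
      rintro y ⟨q, s, hs, hy, hq⟩
      rw [hinter, hA] at hq
      have hpos : 0 < μ (L '' Metric.ball q s) := by
        rw [← hA]; exact hD.pos hμ' q hs
      have hfin : μ (L '' Metric.ball q s) ≠ ∞ := by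
        rw [← hA]; exact measure_ball_lt_top.ne
      refine (mem_halo (halo_iter_isOpen hG hE g j).measurableSet g (L y)).2
        ⟨_, hmem q s hs, mem_image_of_mem _ hy, hpos, ?_⟩
      exact (ENNReal.lt_div_iff_mul_lt (Or.inl hpos.ne') (Or.inl hfin)).2 hq
  rw [hL] at hxR
  obtain ⟨y, hy, rfl⟩ := hxR
  exact hrel _ (hsub hy)

lemma halo_iter_measure {n : ℕ} {𝔊 : Set (Set (EuclideanSpace ℝ (Fin n)))}
    (hG : ∀ R ∈ 𝔊, IsRect R) {μ ν : Measure (EuclideanSpace ℝ (Fin n))}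
    {γ c : ℝ} (h : TauberianCond μ ν 𝔊 γ c)
    {E : Set (EuclideanSpace ℝ (Fin n))} (hE : IsOpen E) (k : ℕ) :
    ν ((halo μ 𝔊 (ENNReal.ofReal γ))^[k] E) ≤ ENNReal.ofReal c ^ k * ν E := by
  induction k with
  | zero => simp
  | succ k ih =>
    rw [Function.iterate_succ_apply']
    refine (h _ (halo_iter_isOpen hG hE _ k).measurableSet).trans ?_
    calc _ ≤ ENNReal.ofReal c * (ENNReal.ofReal c ^ k * ν E) := by gcongr
      _ = _ := by ring

/-- restricted weak type estimate, from the proof of Theorem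
`t.doubling` of the paper. If `μ` is doubling w.r.t. a homothecy invariant collection
`𝔊` of open rectangles and the Tauberian condition at some level `γ ∈ (0,1)` holds with
respect to `ν`, then there are `p₀ > 1` and `C > 0` such that
`ν({M_{𝔊,μ}(1_E) > λ}) ≤ (C/λ^{p₀})·ν(E)` for all `λ ∈ (0,1)` and all Borel `E`. -/
theorem statement19 (n : ℕ) (𝔊 : Set (Set (EuclideanSpace ℝ (Fin n))))
    (hG : ∀ R ∈ 𝔊, IsRect R) (hhom : HomothecyInvariant 𝔊)
    (μ ν : Measure (EuclideanSpace ℝ (Fin n)))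
    (hlocμ : IsLocallyFiniteMeasure μ) (hlocν : IsLocallyFiniteMeasure ν)
    (hμ : μ ≠ 0) (hdbl : ∃ Δ : ℝ, 1 < Δ ∧ DoublingWrt μ 𝔊 Δ)
    (γ : ℝ) (hγ : γ ∈ Set.Ioo (0 : ℝ) 1)
    (htaub : ∃ c : ℝ, 0 < c ∧ TauberianCond μ ν 𝔊 γ c) :
    ∃ p₀ : ℝ, 1 < p₀ ∧ ∃ C : ℝ, 0 < C ∧
      ∀ lam ∈ Set.Ioo (0 : ℝ) 1, ∀ E : Set (EuclideanSpace ℝ (Fin n)), MeasurableSet E →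
        ν {x | ENNReal.ofReal lam < maxOp μ 𝔊 (E.indicator 1) x}
          ≤ ENNReal.ofReal (C / lam ^ p₀) * ν E := by
  obtain ⟨Δ, hΔ1, hdbl⟩ := hdbl
  obtain ⟨c, hc0, htaub⟩ := htaub
  obtain ⟨hγ0, hγ1⟩ := hγ
  set c' : ℝ := max c 2 with hc'
  have hc'2 : 2 ≤ c' := le_max_right _ _
  have htaub' : TauberianCond μ ν 𝔊 γ c' := fun E hE => by
    refine (htaub E hE).trans ?_
    gcongr
    exact le_max_left _ _
  -- the intermediate level
  obtain ⟨r, hr, hr1⟩ := exists_between hγ1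
  have hr0 : 0 < r := hγ0.trans hr
  obtain ⟨N, hN⟩ := exists_pow_lt_of_lt_one (show (0:ℝ) < 1 / Δ by positivity) hr1
  have hNr : r ^ (N + 1) * Δ ≤ 1 := by
    have h1 : r ^ (N + 1) ≤ r ^ N := pow_le_pow_of_le_one hr0.le hr1.le (Nat.le_succ N)
    have h2 : r ^ (N + 1) < 1 / Δ := h1.trans_lt hN
    exact ((lt_div_iff₀ (by linarith)).1 h2).le
  have hNE : ENNReal.ofReal r ^ (N + 1) * ENNReal.ofReal Δ ≤ 1 := by
    rw [← ENNReal.ofReal_pow hr0.le, ← ENNReal.ofReal_mul (by positivity)]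
    exact ENNReal.ofReal_le_one.2 hNr
  have hgr : ENNReal.ofReal γ < ENNReal.ofReal r := (ENNReal.ofReal_lt_ofReal_iff hr0).2 hr
  have hr1E : ENNReal.ofReal r < 1 := ENNReal.ofReal_lt_one.2 hr1
  -- the exponent
  set K : ℝ := c' ^ (N + 2) with hK
  have hK1 : 1 < K := one_lt_pow₀ (by linarith) (by omega)
  set p₁ : ℝ := Real.log K / Real.log (1 / γ) with hp₁
  have hlog : 0 < Real.log (1 / γ) := Real.log_pos (by rw [lt_div_iff₀ hγ0]; linarith)
  have hp₁0 : 0 < p₁ := div_pos (Real.log_pos hK1) hlog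
  have hKγ : K = γ ^ (-p₁) := by
    rw [Real.rpow_def_of_pos hγ0]
    have : Real.log γ * -p₁ = Real.log K := by
      have e : Real.log (1 / γ) = - Real.log γ := by rw [one_div, Real.log_inv]
      rw [hp₁, e]
      rw [e] at hlog
      have : Real.log γ ≠ 0 := by linarith
      field_simp
    rw [this, Real.exp_log (by linarith)]
  refine ⟨p₁ + 1, by linarith, c', by linarith, ?_⟩
  intro lam hlam
  obtain ⟨hl0, hl1⟩ := hlam
  -- open sets first
  have hopen : ∀ U : Set (EuclideanSpace ℝ (Fin n)), IsOpen U →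
      ν {x | ENNReal.ofReal lam < maxOp μ 𝔊 (U.indicator 1) x}
        ≤ ENNReal.ofReal (c' / lam ^ (p₁ + 1)) * ν U := by
    intro U hU
    obtain ⟨k, hk1, hk2⟩ := exists_nat_pow_near_of_lt_one hl0 hl1.le hγ0 hγ1
    have hkE : ENNReal.ofReal γ ^ (k + 1) ≤ ENNReal.ofReal lam := by
      rw [← ENNReal.ofReal_pow hγ0.le]
      exact ENNReal.ofReal_le_ofReal hk1.le
    have h1 := halo_level hG hhom hμ hdbl (ENNReal.ofReal_pos.2 hγ0).ne' hgr hr1E hNE k hkE hU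
    refine (measure_mono h1).trans ((halo_iter_measure hG htaub' hU _).trans ?_)
    rw [← ENNReal.ofReal_pow (by linarith)]
    gcongr
    rw [pow_succ, pow_mul, ← hK, mul_comm, div_eq_mul_inv]
    gcongr
    calc K ^ k = (γ ^ k) ^ (-p₁) := by
          rw [hKγ, ← Real.rpow_natCast, ← Real.rpow_natCast, ← Real.rpow_mul hγ0.le,
            ← Real.rpow_mul hγ0.le, mul_comm]
      _ ≤ lam ^ (-p₁) := Real.rpow_le_rpow_of_nonpos hl0 hk2 (by linarith)
      _ ≤ lam ^ (-(p₁ + 1)) := Real.rpow_le_rpow_of_exponent_ge hl0 hl1.le (by linarith)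
      _ = _ := Real.rpow_neg hl0.le _
  intro E hE
  have hK0 : ENNReal.ofReal (c' / lam ^ (p₁ + 1)) ≠ 0 :=
    (ENNReal.ofReal_pos.2 (div_pos (by linarith) (Real.rpow_pos_of_pos hl0 _))).ne'
  rw [mul_comm, ← ENNReal.div_le_iff_le_mul (Or.inl hK0) (Or.inl ENNReal.ofReal_ne_top),
    E.measure_eq_iInf_isOpen ν]
  refine le_iInf₂ fun U hEU => le_iInf fun hU => ?_
  rw [ENNReal.div_le_iff_le_mul (Or.inl hK0) (Or.inl ENNReal.ofReal_ne_top), mul_comm]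
  refine (measure_mono ?_).trans (hopen U hU)
  intro x hx
  obtain ⟨B, hB, hxB, h0, h⟩ := (mem_halo hE _ x).1 hx
  refine (mem_halo hU.measurableSet _ x).2 ⟨B, hB, hxB, h0, h.trans_le ?_⟩
  gcongr
end
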